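/- arXiv:1802.00338 — 15 statements merged into one kernel-verified Lean document; each statement's English description precedes it below -/
import Mathlib

section
/- Let λ ≥ 2 be a natural number. For every solution (x(t), y(t), z(t)) of the rattleback system, the function H(t) := x(t) · y(t)^λ is constant, i.e. x(t) · y(t)^λ = x(0) · y(0)^λ for all t ∈ ℝ. -/
/-- For every solution of the rattleback system `ẋ = λxz, ẏ = −yz, ż = y² − λx²`
(with parameter `λ ≥ 2` a natural number), the Hamiltonian
`H(t) = x(t)·y(t)^λ` is constant. -/
theorem rattleback_hamiltonian_constant (lam : ℕ) (hlam : 2 ≤ lam)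
    (x y z : ℝ → ℝ)
    (hx : ∀ t : ℝ, HasDerivAt x ((lam : ℝ) * x t * z t) t)
    (hy : ∀ t : ℝ, HasDerivAt y (-(y t * z t)) t)
    (hz : ∀ t : ℝ, HasDerivAt z ((y t) ^ 2 - (lam : ℝ) * (x t) ^ 2) t) :
    ∀ t : ℝ, x t * (y t) ^ lam = x 0 * (y 0) ^ lam := by
  have hH : ∀ t : ℝ, HasDerivAt (fun s => x s * (y s) ^ lam) 0 t := by
    intro t
    have h := (hx t).mul ((hy t).pow lam)
    obtain ⟨n, rfl⟩ : ∃ n, lam = n + 1 := ⟨lam - 1, by omega⟩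
    refine h.congr_deriv ?_
    simp only [Nat.add_sub_cancel, Pi.pow_apply]
    push_cast
    ring
  intro t
  exact is_const_of_deriv_eq_zero (fun s => (hH s).differentiableAt)
    (fun s => (hH s).deriv) t 0
end

section
/- Let λ ≥ 2 be a natural number and let a, b, c, d ∈ ℝ satisfy ad − bc = 1. For every (x, y, z) ∈ ℝ³ with y ≠ 0, the rescaled Hamiltonian vector field y^{1−λ} · Π_{a,b}(x,y,z) · ∇H_{c,d}(x,y,z) equals the rattleback vector field (λxz, −yz, y² − λx²), where Π_{a,b}(x,y,z) is the 3×3 skew-symmetric matrix with entries Π₁₂ = az, Π₁₃ = −ay − λbxy^{λ−1}, Π₂₃ = ax + by^λ (and Π₂₁ = −Π₁₂, Π₃₁ = −Π₁₃, Π₃₂ = −Π₂₃, zero diagonal), and ∇H_{c,d}(x,y,z) = (cx + dy^λ, cy + dλxy^{λ−1}, cz) is the gradient of H_{c,d}(x,y,z) = (c/2)(x² + y² + z²) + d·xy^λ. In particular (taking a = d = 1, b = c = 0), y^{1−λ} · Π_C(x,y,z) · ∇H(x,y,z) = (λxz, −yz, y² − λx²), where Π_C has entries Π₁₂ = z, Π₁₃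 = −y, Π₂₃ = x and H(x,y,z) = xy^λ. -/
/-- Hamilton–Poisson realizations of the rattleback system parameterized by `SL(2,ℝ)`:
for `a d − b c = 1` and `y ≠ 0`, the rescaled Hamiltonian vector field
`y^{1−λ} · Π_{a,b}(x,y,z) · ∇H_{c,d}(x,y,z)` equals the rattleback vector field
`(λxz, −yz, y² − λx²)`; in particular (for `a = d = 1`, `b = c = 0`)
`y^{1−λ} · Π_C(x,y,z) · ∇H(x,y,z)` equals the rattleback vector field. -/
theorem rattleback_hamilton_poisson_realizations (lam : ℕ) (hlam : 2 ≤ lam)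
    (a b c d : ℝ) (habcd : a * d - b * c = 1)
    (x y z : ℝ) (hy : y ≠ 0) :
    (y ^ ((1 : ℤ) - (lam : ℤ))) •
      Matrix.mulVec
        !![0, a * z, -(a * y) - (lam : ℝ) * b * x * y ^ (lam - 1);
           -(a * z), 0, a * x + b * y ^ lam;
           a * y + (lam : ℝ) * b * x * y ^ (lam - 1), -(a * x + b * y ^ lam), 0]
        ![c * x + d * y ^ lam, c * y + d * (lam : ℝ) * x * y ^ (lam - 1), c * z]
      = ![(lam : ℝ) * x * z, -(y * z), y ^ 2 - (lam : ℝ) * x ^ 2]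
    ∧
    (y ^ ((1 : ℤ) - (lam : ℤ))) •
      Matrix.mulVec
        !![0, z, -y;
           -z, 0, x;
           y, -x, 0]
        ![y ^ lam, (lam : ℝ) * x * y ^ (lam - 1), 0]
      = ![(lam : ℝ) * x * z, -(y * z), y ^ 2 - (lam : ℝ) * x ^ 2] := by
  obtain ⟨n, rfl⟩ : ∃ n, lam = n + 1 := ⟨lam - 1, by omega⟩
  have hq : y ^ ((1 : ℤ) - ((n + 1 : ℕ) : ℤ)) * y ^ n = 1 := by
    rw [← zpow_natCast y n, ← zpow_add₀ hy]
    have : (1 : ℤ) - ((n + 1 : ℕ) : ℤ) + (n : ℤ) = 0 := by push_cast; ring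
    rw [this, zpow_zero]
  rw [Nat.add_sub_cancel, pow_succ]
  generalize y ^ ((1 : ℤ) - ((n + 1 : ℕ) : ℤ)) = q at hq ⊢
  generalize y ^ n = p at hq ⊢
  generalize ((n + 1 : ℕ) : ℝ) = k
  have h2 : q * p * (a * d - b * c) = 1 := by rw [hq, habcd, one_mul]
  constructor
  · ext i
    fin_cases i <;> simp
    · linear_combination (k * x * z) * h2
    · linear_combination (-(y * z)) * h2
    · linear_combination (y ^ 2 - k * x ^ 2) * h2
  · ext i
    fin_cases i <;> simp
    · linear_combination (k * x * z) * hq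
    · linear_combination (y * z) * hq
    · linear_combination (y ^ 2 - k * x ^ 2) * hq
end

section
/- Let λ ≥ 2 be a natural number and M ∈ ℝ. The equilibria e₊ = (M, M√λ, 0) and e₋ = (M, −M√λ, 0) of the rattleback system are Lyapunov stable: for each of these points e and every ε > 0 there exists δ > 0 such that every solution (x(t), y(t), z(t)) of the rattleback system with ‖(x(0), y(0), z(0)) − e‖ < δ satisfies ‖(x(t), y(t), z(t)) − e‖ < ε for all t ≥ 0. -/
/-- Stability from an isolated level set of the two first integrals. -/
lemma stable_of_isolated (lam : ℕ) (hlam : 2 ≤ lam) (e : ℝ × ℝ × ℝ) (ε r : ℝ) (hr : 0 < r)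
    (hre : r ≤ ε)
    (hiso : ∀ v : ℝ × ℝ × ℝ,
      (v.1 - e.1) ^ 2 + (v.2.1 - e.2.1) ^ 2 + (v.2.2 - e.2.2) ^ 2 = r ^ 2 →
      v.1 ^ 2 + v.2.1 ^ 2 + v.2.2 ^ 2 = e.1 ^ 2 + e.2.1 ^ 2 + e.2.2 ^ 2 →
      v.1 * v.2.1 ^ lam = e.1 * e.2.1 ^ lam → False) :
    ∃ δ > (0 : ℝ), ∀ x y z : ℝ → ℝ,
      (∀ t : ℝ, HasDerivAt x ((lam : ℝ) * x t * z t) t) →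
      (∀ t : ℝ, HasDerivAt y (-(y t * z t)) t) →
      (∀ t : ℝ, HasDerivAt z ((y t) ^ 2 - (lam : ℝ) * (x t) ^ 2) t) →
      Real.sqrt ((x 0 - e.1) ^ 2 + (y 0 - e.2.1) ^ 2 + (z 0 - e.2.2) ^ 2) < δ →
      ∀ t ≥ (0 : ℝ),
        Real.sqrt ((x t - e.1) ^ 2 + (y t - e.2.1) ^ 2 + (z t - e.2.2) ^ 2) < ε := by
  set N : ℝ × ℝ × ℝ → ℝ := fun v =>
    (v.1 - e.1) ^ 2 + (v.2.1 - e.2.1) ^ 2 + (v.2.2 - e.2.2) ^ 2 with hN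
  set F : ℝ × ℝ × ℝ → ℝ := fun v =>
    |v.1 ^ 2 + v.2.1 ^ 2 + v.2.2 ^ 2 - (e.1 ^ 2 + e.2.1 ^ 2 + e.2.2 ^ 2)|
      + |v.1 * v.2.1 ^ lam - e.1 * e.2.1 ^ lam| with hF
  have cN : Continuous N := by fun_prop
  have cF : Continuous F := by fun_prop
  have absle : ∀ (v : ℝ × ℝ × ℝ) (d : ℝ), 0 ≤ d → N v ≤ d ^ 2 → dist v e ≤ d := by
    intro v d hd hv
    simp only [hN] at hv
    rw [Prod.dist_eq, Prod.dist_eq, Real.dist_eq, Real.dist_eq, Real.dist_eq]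
    refine max_le ?_ (max_le ?_ ?_) <;> apply abs_le_of_sq_le_sq _ hd <;>
      nlinarith [sq_nonneg (v.1 - e.1), sq_nonneg (v.2.1 - e.2.1), sq_nonneg (v.2.2 - e.2.2)]
  have hcomp : IsCompact {v | N v = r ^ 2} := by
    apply (isCompact_closedBall e r).of_isClosed_subset
    · exact isClosed_eq cN continuous_const
    · intro v hv
      exact absle v r hr.le (le_of_eq hv)
  obtain ⟨w, hw, hmin⟩ := hcomp.exists_isMinOn
    ⟨(e.1 + r, e.2.1, e.2.2), by simp [hN]⟩ cF.continuousOn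
  have hpos : 0 < F w := by
    by_contra hneg
    have h1 := abs_nonneg (w.1 ^ 2 + w.2.1 ^ 2 + w.2.2 ^ 2 - (e.1 ^ 2 + e.2.1 ^ 2 + e.2.2 ^ 2))
    have h2 := abs_nonneg (w.1 * w.2.1 ^ lam - e.1 * e.2.1 ^ lam)
    simp only [hF] at hneg
    apply hiso w hw
    · exact sub_eq_zero.1 (abs_eq_zero.1 (by linarith))
    · exact sub_eq_zero.1 (abs_eq_zero.1 (by linarith))
  have hFe : F e = 0 := by simp [hF]
  obtain ⟨d, hd, hball⟩ := Metric.continuousAt_iff.1 (cF.continuousAt (x := e)) (F w) hpos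
  refine ⟨min (d / 2) r, lt_min (by linarith) hr, ?_⟩
  intro x y z hx hy hz h0 t ht
  have hNn : ∀ v, 0 ≤ N v := fun v => by simp only [hN]; positivity
  set v : ℝ → ℝ × ℝ × ℝ := fun t => (x t, y t, z t) with hv
  have cx : Continuous x := continuous_iff_continuousAt.2 fun t => (hx t).continuousAt
  have cy : Continuous y := continuous_iff_continuousAt.2 fun t => (hy t).continuousAt
  have cz : Continuous z := continuous_iff_continuousAt.2 fun t => (hz t).continuousAt
  have cv : Continuous v := by fun_prop
  have h0' : Real.sqrt (N (v 0)) < min (d / 2) r := h0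
  have h0d := h0'.trans_le (min_le_left _ _)
  have h0r := h0'.trans_le (min_le_right _ _)
  have hF0 : F (v 0) < F w := by
    have := hball (x := v 0) ((absle (v 0) (d / 2) (by linarith)
      ((Real.sqrt_lt' (by linarith)).1 h0d).le).trans_lt (by linarith))
    rw [hFe, Real.dist_eq, sub_zero] at this
    exact (le_abs_self _).trans_lt this
  have hH : ∀ s, x s ^ 2 + y s ^ 2 + z s ^ 2 = x 0 ^ 2 + y 0 ^ 2 + z 0 ^ 2 := by
    have hd : ∀ s, HasDerivAt (fun s => x s ^ 2 + y s ^ 2 + z s ^ 2) 0 s := fun s => by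
      have := (((hx s).pow 2).add ((hy s).pow 2)).add ((hz s).pow 2)
      refine this.congr_deriv ?_
      push_cast
      ring
    intro s
    exact is_const_of_deriv_eq_zero (fun s => (hd s).differentiableAt) (fun s => (hd s).deriv) s 0
  have hC : ∀ s, x s * y s ^ lam = x 0 * y 0 ^ lam := by
    have hd : ∀ s, HasDerivAt (fun s => x s * y s ^ lam) 0 s := fun s => by
      have := (hx s).mul ((hy s).pow lam)
      refine this.congr_deriv ?_
      obtain ⟨k, rfl⟩ : ∃ k, lam = k + 1 := ⟨lam - 1, by omega⟩
      simp only [Nat.add_sub_cancel, Pi.pow_apply]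
      ring
    intro s
    exact is_const_of_deriv_eq_zero (fun s => (hd s).differentiableAt) (fun s => (hd s).deriv) s 0
  have hFc : ∀ s, F (v s) = F (v 0) := fun s => by
    simp only [hF, hv, hH s, hC s]
  change Real.sqrt (N (v t)) < ε
  by_contra hcon
  push Not at hcon
  have h1 : r ^ 2 ≤ N (v t) := (Real.le_sqrt hr.le (hNn _)).1 (hre.trans hcon)
  have h2 : N (v 0) ≤ r ^ 2 := ((Real.sqrt_lt' hr).1 h0r).le
  obtain ⟨s, -, hs⟩ := intermediate_value_Icc ht (cN.comp cv).continuousOn ⟨h2, h1⟩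
  have h3 : F w ≤ F (v s) := hmin hs
  rw [hFc] at h3
  linarith

lemma level_set_isolated (lam : ℕ) (hlam : 2 ≤ lam) (M b x y z : ℝ) (hM : M ≠ 0)
    (hb : b ^ 2 = lam * M ^ 2)
    (hH : x ^ 2 + y ^ 2 + z ^ 2 = M ^ 2 + b ^ 2) (hC : x * y ^ lam = M * b ^ lam) :
    x ^ 2 = M ^ 2 ∧ y ^ 2 = b ^ 2 ∧ z = 0 := by
  have hl : (0 : ℝ) < lam := by exact_mod_cast (by omega : 0 < lam)
  have hM2 : 0 < M ^ 2 := by positivity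
  have hb2 : 0 < b ^ 2 := by rw [hb]; positivity
  have hb0 : b ≠ 0 := fun h => by simp [h] at hb2
  have hne : x * y ^ lam ≠ 0 := by rw [hC]; exact mul_ne_zero hM (pow_ne_zero _ hb0)
  have hx0 : x ≠ 0 := left_ne_zero_of_mul hne
  have hy0 : y ≠ 0 := fun h => by
    rw [h, zero_pow (by omega), mul_zero] at hne; exact hne rfl
  set p := x ^ 2 / M ^ 2 with hp
  set q := y ^ 2 / b ^ 2 with hq
  have hp0 : 0 < p := by positivity
  have hq0 : 0 < q := by positivity
  have hxp : x ^ 2 = p * M ^ 2 := by rw [hp]; field_simp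
  have hyq : y ^ 2 = q * b ^ 2 := by rw [hq]; field_simp
  have hpq : p * q ^ lam = 1 := by
    have : (x * y ^ lam) ^ 2 = (M * b ^ lam) ^ 2 := by rw [hC]
    have e1 : x ^ 2 * (y ^ 2) ^ lam = M ^ 2 * (b ^ 2) ^ lam := by
      rw [mul_pow, mul_pow] at this
      rw [← pow_mul, ← pow_mul, mul_comm 2 lam, pow_mul, pow_mul]; exact this
    rw [hp, hq, div_pow, div_mul_div_comm, e1, div_self (by positivity)]
  have hlog : Real.log p + lam * Real.log q = 0 := by
    rw [← Real.log_pow, ← Real.log_mul hp0.ne' (by positivity), hpq, Real.log_one]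
  have hsum : (p - 1 + lam * (q - 1)) * M ^ 2 + z ^ 2 = 0 := by
    rw [hxp, hyq, hb] at hH; linear_combination hH
  have hlp := Real.log_le_sub_one_of_pos hp0
  have hlq := Real.log_le_sub_one_of_pos hq0
  have hlq' := mul_le_mul_of_nonneg_left hlq hl.le
  have hle : p - 1 + lam * (q - 1) ≤ 0 := by
    by_contra h
    push Not at h
    nlinarith [mul_pos h hM2, sq_nonneg z]
  have hp1 : p = 1 := by
    by_contra h
    linarith [Real.log_lt_sub_one_of_pos hp0 h]
  have hq1 : q = 1 := by
    by_contra h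
    linarith [mul_lt_mul_of_pos_left (Real.log_lt_sub_one_of_pos hq0 h) hl]
  refine ⟨by rw [hxp, hp1, one_mul], by rw [hyq, hq1, one_mul], ?_⟩
  rw [hp1, hq1] at hsum
  have : z ^ 2 = 0 := by linarith
  exact pow_eq_zero_iff (two_ne_zero) |>.1 this

/-- If `x = ± a` and `x` is closer than `2|a|` to `a`, then `x = a`. -/
lemma eq_of_sq_eq_of_near (x a : ℝ) (h : x ^ 2 = a ^ 2) (hn : (x - a) ^ 2 ≤ a ^ 2) : x = a := by
  rcases sq_eq_sq_iff_eq_or_eq_neg.1 h with h | h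
  · exact h
  · subst h
    have : a ^ 2 = 0 := by nlinarith [sq_nonneg a]
    have : a = 0 := pow_eq_zero_iff (two_ne_zero) |>.1 this
    simp [this]

/-- The equilibria `e₊ = (M, M√λ, 0)` and `e₋ = (M, −M√λ, 0)` of the rattleback system
`ẋ = λxz, ẏ = −yz, ż = y² − λx²` (with `λ ≥ 2` a natural number) are Lyapunov stable. -/
theorem rattleback_stable_equilibria (lam : ℕ) (hlam : 2 ≤ lam) (M : ℝ)
    (e : ℝ × ℝ × ℝ)
    (he : e = (M, M * Real.sqrt lam, 0) ∨ e = (M, -(M * Real.sqrt lam), 0)) :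
    ∀ ε > (0 : ℝ), ∃ δ > (0 : ℝ), ∀ x y z : ℝ → ℝ,
      (∀ t : ℝ, HasDerivAt x ((lam : ℝ) * x t * z t) t) →
      (∀ t : ℝ, HasDerivAt y (-(y t * z t)) t) →
      (∀ t : ℝ, HasDerivAt z ((y t) ^ 2 - (lam : ℝ) * (x t) ^ 2) t) →
      Real.sqrt ((x 0 - e.1) ^ 2 + (y 0 - e.2.1) ^ 2 + (z 0 - e.2.2) ^ 2) < δ →
      ∀ t ≥ (0 : ℝ),
        Real.sqrt ((x t - e.1) ^ 2 + (y t - e.2.1) ^ 2 + (z t - e.2.2) ^ 2) < ε := by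
  intro ε hε
  obtain ⟨b, hb, rfl⟩ : ∃ b : ℝ, b ^ 2 = lam * M ^ 2 ∧ e = (M, b, 0) := by
    have hs : Real.sqrt (lam : ℝ) ^ 2 = lam := Real.sq_sqrt (Nat.cast_nonneg _)
    rcases he with h | h
    · exact ⟨_, by rw [mul_pow, hs]; ring, h⟩
    · exact ⟨_, by rw [neg_sq, mul_pow, hs]; ring, h⟩
  by_cases hM : M = 0
  · subst hM
    have hb0 : b = 0 := by simpa using hb
    subst hb0
    refine stable_of_isolated lam hlam _ ε ε hε le_rfl ?_
    rintro ⟨x, y, z⟩ h1 h2 -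
    simp only at h1 h2
    nlinarith [sq_pos_of_pos hε]
  · have hr : 0 < min ε |M| := lt_min hε (abs_pos.2 hM)
    refine stable_of_isolated lam hlam _ ε (min ε |M|) hr (min_le_left _ _) ?_
    rintro ⟨x, y, z⟩ h1 h2 h3
    simp only at h1 h2 h3
    obtain ⟨hx, hy, hz⟩ := level_set_isolated lam hlam M b x y z hM hb (by linarith) h3
    have hrM : (min ε |M|) ^ 2 ≤ M ^ 2 := by
      rw [← sq_abs M]
      exact pow_le_pow_left₀ hr.le (min_le_right _ _) 2
    have hl : (2 : ℝ) ≤ lam := by exact_mod_cast hlam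
    have hMb : M ^ 2 ≤ b ^ 2 := by rw [hb]; nlinarith [sq_nonneg M]
    have hxM : x = M := eq_of_sq_eq_of_near x M hx
      (by nlinarith [sq_nonneg (y - b), sq_nonneg (z - 0)])
    have hyb : y = b := eq_of_sq_eq_of_near y b hy
      (by nlinarith [sq_nonneg (x - M), sq_nonneg (z - 0)])
    subst hxM hyb hz
    have := sq_pos_of_pos hr
    simp only [sub_self] at h1
    linarith
end

section
/- Let λ ≥ 2 be a natural number and M ∈ ℝ with M ≠ 0. The equilibrium (0, 0, M) of the rattleback system is unstable: there exists ε > 0 such that for every δ > 0 there exist a solution (x(t), y(t), z(t)) of the rattleback system and a time t ≥ 0 with ‖(x(0), y(0), z(0)) − (0, 0, M)‖ < δ and ‖(x(t), y(t), z(t)) − (0, 0, M)‖ ≥ ε. -/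
lemma rb_close (A δ : ℝ) (hA : 0 < A) (hδ : 0 < δ) :
    ∃ u : ℝ, 0 < u ∧
      (A / Real.cosh u) ^ 2 + (A * Real.sinh u / Real.cosh u - A) ^ 2 < δ ^ 2 := by
  have hu : 0 < 8 * A ^ 2 / δ ^ 2 := by positivity
  refine ⟨8 * A ^ 2 / δ ^ 2, hu, ?_⟩
  set u := 8 * A ^ 2 / δ ^ 2 with hudef
  have hc := Real.cosh_pos u
  have h1 := Real.cosh_sq u
  have h2 : Real.cosh u - Real.sinh u ≤ 1 := by
    rw [Real.cosh_sub_sinh]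
    exact Real.exp_le_one_iff.mpr (by linarith)
  have h3 : u / 2 ≤ Real.cosh u := by
    rw [Real.cosh_eq]
    have := Real.add_one_le_exp u
    have := Real.exp_pos (-u)
    linarith
  have h4 : (A / Real.cosh u) ^ 2 + (A * Real.sinh u / Real.cosh u - A) ^ 2
      = 2 * A ^ 2 * (Real.cosh u - Real.sinh u) / Real.cosh u := by
    field_simp
    linear_combination -h1
  rw [h4, div_lt_iff₀ hc]
  have h5 : δ ^ 2 * u = 8 * A ^ 2 := by
    rw [hudef]; field_simp
  have h6 : δ ^ 2 * (u / 2) ≤ δ ^ 2 * Real.cosh u := by gcongr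
  have h7 : 0 < A ^ 2 := by positivity
  nlinarith

lemma rb_sech (A k c s : ℝ) :
    HasDerivAt (fun s => A / Real.cosh (k * (s - c)))
      (-(A * k * Real.sinh (k * (s - c)) / Real.cosh (k * (s - c)) ^ 2)) s := by
  have h0 : HasDerivAt (fun s : ℝ => k * (s - c)) k s := by
    simpa using ((hasDerivAt_id s).sub_const c).const_mul k
  have hc := (Real.cosh_pos (k * (s - c))).ne'
  refine ((hasDerivAt_const s A).fun_div h0.cosh hc).congr_deriv ?_
  ring

lemma rb_tanh (A k c s : ℝ) :
    HasDerivAt (fun s => A * Real.sinh (k * (s - c)) / Real.cosh (k * (s - c)))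
      (A * k / Real.cosh (k * (s - c)) ^ 2) s := by
  have h0 : HasDerivAt (fun s : ℝ => k * (s - c)) k s := by
    simpa using ((hasDerivAt_id s).sub_const c).const_mul k
  have hc := (Real.cosh_pos (k * (s - c))).ne'
  refine ((h0.sinh.const_mul A).fun_div h0.cosh hc).congr_deriv ?_
  have h1 := Real.cosh_sq (k * (s - c))
  rw [div_left_inj' (pow_ne_zero 2 hc)]
  linear_combination A * k * h1

/-- For `M ≠ 0`, the equilibrium `(0, 0, M)` of the rattleback system
`ẋ = λxz, ẏ = −yz, ż = y² − λx²` (with `λ ≥ 2` a natural number) is unstable. -/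
theorem rattleback_unstable_equilibria (lam : ℕ) (hlam : 2 ≤ lam) (M : ℝ) (hM : M ≠ 0) :
    ∃ ε > (0 : ℝ), ∀ δ > (0 : ℝ), ∃ x y z : ℝ → ℝ, ∃ t : ℝ, t ≥ 0 ∧
      (∀ s : ℝ, HasDerivAt x ((lam : ℝ) * x s * z s) s) ∧
      (∀ s : ℝ, HasDerivAt y (-(y s * z s)) s) ∧
      (∀ s : ℝ, HasDerivAt z ((y s) ^ 2 - (lam : ℝ) * (x s) ^ 2) s) ∧
      Real.sqrt ((x 0) ^ 2 + (y 0) ^ 2 + (z 0 - M) ^ 2) < δ ∧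
      Real.sqrt ((x t) ^ 2 + (y t) ^ 2 + (z t - M) ^ 2) ≥ ε := by
  refine ⟨|M|, abs_pos.mpr hM, fun δ hδ => ?_⟩
  obtain ⟨u, hu, hlt⟩ := rb_close |M| δ (abs_pos.mpr hM) hδ
  have hl : (0 : ℝ) < lam := by
    have : 0 < lam := by omega
    exact_mod_cast this
  rcases lt_or_gt_of_ne hM with hneg | hpos
  · rw [abs_of_neg hneg] at *
    have hk : 0 < -M := by linarith
    have e0 : -M * (0 - u / (-M)) = -u := by field_simp; ring
    refine ⟨fun _ => 0, fun s => (-M) / Real.cosh (-M * (s - u / (-M))),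
      fun s => (-M) * Real.sinh (-M * (s - u / (-M))) / Real.cosh (-M * (s - u / (-M))),
      u / (-M), by positivity, fun s => ?_, fun s => ?_, fun s => ?_, ?_, ?_⟩
    · simpa using hasDerivAt_const s (0 : ℝ)
    · refine (rb_sech (-M) (-M) (u / (-M)) s).congr_deriv ?_
      beta_reduce
      ring
    · refine (rb_tanh (-M) (-M) (u / (-M)) s).congr_deriv ?_
      beta_reduce
      ring
    · rw [Real.sqrt_lt' hδ]
      simp only [e0, Real.cosh_neg, Real.sinh_neg]
      refine lt_of_eq_of_lt ?_ hlt
      ring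
    · apply Real.le_sqrt_of_sq_le
      simp
      nlinarith
  · rw [abs_of_pos hpos] at *
    have hk : 0 < lam * M := by positivity
    have e0 : lam * M * (0 - u / (lam * M)) = -u := by field_simp; ring
    refine ⟨fun s => M / Real.cosh (lam * M * (s - u / (lam * M))), fun _ => 0,
      fun s => (-M) * Real.sinh (lam * M * (s - u / (lam * M))) /
        Real.cosh (lam * M * (s - u / (lam * M))),
      u / (lam * M), by positivity, fun s => ?_, fun s => ?_, fun s => ?_, ?_, ?_⟩
    · refine (rb_sech M (lam * M) (u / (lam * M)) s).congr_deriv ?_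
      beta_reduce
      ring
    · simpa using hasDerivAt_const s (0 : ℝ)
    · refine (rb_tanh (-M) (lam * M) (u / (lam * M)) s).congr_deriv ?_
      beta_reduce
      ring
    · rw [Real.sqrt_lt' hδ]
      simp only [e0, Real.cosh_neg, Real.sinh_neg]
      refine lt_of_eq_of_lt ?_ hlt
      ring
    · apply Real.le_sqrt_of_sq_le
      simp
      nlinarith
end

section
/- Let λ ≥ 2 be a natural number and M ∈ ℝ with M ≠ 0, and set e₊ = (|M|, |M|√λ, 0) and T₀ = π√2 / (|M|·√(λ(λ+1))). For every η > 0 there exist a real number T > 0 with |T − T₀| < η and a nonconstant T-periodic solution (x(t), y(t), z(t)) of the rattleback system whose orbit is contained in the open ball of radius η centered at e₊, i.e. ‖(x(t), y(t), z(t)) − e₊‖ < η for all t ∈ ℝ. -/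
open Filter Topology

/-- Normal form of a potential with a nondegenerate minimum. -/
lemma rb_normal_form (V f : ℝ → ℝ) (om : ℝ) (hom : 0 < om) (hV : AnalyticAt ℝ V 0)
    (hV0 : V 0 = 0) (hVf : ∀ w, HasDerivAt V (f w) w) (hf0 : f 0 = 0)
    (hf' : HasDerivAt f (om ^ 2) 0) :
    ∃ k : ℝ → ℝ, AnalyticAt ℝ k 0 ∧ k 0 = 0 ∧ deriv k 0 = om⁻¹ ∧
      ∀ᶠ u in 𝓝 0, V (k u) = u ^ 2 / 2 := by
  obtain ⟨p, hp⟩ := hV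
  have hQ : AnalyticAt ℝ (dslope (dslope V 0) 0) 0 :=
    ⟨_, hp.has_fpower_series_dslope_fslope.has_fpower_series_dslope_fslope⟩
  set Q := dslope (dslope V 0) 0 with hQdef
  have hVQ : ∀ w, V w = w ^ 2 * Q w := by
    intro w
    have h1 := sub_smul_dslope V 0 w
    have h2 := sub_smul_dslope (dslope V 0) 0 w
    rw [dslope_same, (hVf 0).deriv, hf0] at h2
    simp only [sub_zero, smul_eq_mul, hV0] at h1 h2
    rw [← h1, ← h2]; ring
  have hQ0 : 2 * Q 0 = om ^ 2 := by
    have e1 : ∀ᶠ w in 𝓝 (0:ℝ), f w = w * (2 * Q w + w * deriv Q w) := by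
      filter_upwards [hQ.eventually_analyticAt] with w hw
      have h1 : HasDerivAt (fun w => w ^ 2 * Q w) (2 * w * Q w + w ^ 2 * deriv Q w) w := by
        refine ((hasDerivAt_pow 2 w).mul hw.differentiableAt.hasDerivAt).congr_deriv ?_
        simp
      have h2 := hVf w
      have : V = fun w => w ^ 2 * Q w := funext hVQ
      rw [this] at h2
      rw [h2.unique h1]; ring
    have hg : DifferentiableAt ℝ (fun w => 2 * Q w + w * deriv Q w) 0 := by
      have := hQ.differentiableAt
      have := hQ.deriv.differentiableAt
      fun_prop
    have h3 := (hasDerivAt_id (0:ℝ)).mul hg.hasDerivAt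
    have h4 := hf'.congr_of_eventuallyEq (f₁ := fun w => w * (2 * Q w + w * deriv Q w))
      (e1.mono fun w hw => hw.symm)
    have h5 := h4.unique h3
    simp at h5
    exact h5.symm
  have hQpos : 0 < 2 * Q 0 := by rw [hQ0]; positivity
  have hh : AnalyticAt ℝ (fun w => w * Real.sqrt (2 * Q w)) 0 := by
    refine analyticAt_id.mul ?_
    have h2 : AnalyticAt ℝ (fun w => 2 * Q w) 0 := analyticAt_const.mul hQ
    have h3 : AnalyticAt ℝ (fun w => Real.exp (Real.log (2 * Q w) / 2)) 0 :=
      ((h2.log hQpos).div analyticAt_const (by norm_num)).rexp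
    refine h3.congr ?_
    filter_upwards [h2.continuousAt.eventually (lt_mem_nhds hQpos)] with w hw
    rw [Real.exp_half, Real.exp_log hw]
  set h := fun w => w * Real.sqrt (2 * Q w) with hdef
  have hh0 : h 0 = 0 := by simp [hdef]
  have hsq : ∀ᶠ w in 𝓝 0, V w = (h w) ^ 2 / 2 := by
    have h2 : AnalyticAt ℝ (fun w => 2 * Q w) 0 := analyticAt_const.mul hQ
    filter_upwards [h2.continuousAt.eventually (lt_mem_nhds hQpos)] with w hw
    rw [hdef]; simp only [mul_pow]
    rw [Real.sq_sqrt hw.le, hVQ]; ring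
  have hd : deriv h 0 = om := by
    have hs : ContinuousAt (fun w => Real.sqrt (2 * Q w)) 0 := by
      have := hQ.continuousAt
      fun_prop
    have : HasDerivAt h (Real.sqrt (2 * Q 0)) 0 := by
      rw [hasDerivAt_iff_tendsto_slope]
      refine (hs.tendsto.mono_left nhdsWithin_le_nhds).congr' ?_
      filter_upwards [self_mem_nhdsWithin] with w hw
      have hw : w ≠ 0 := hw
      simp [slope_def_field, hdef]
      field_simp
    rw [this.deriv, hQ0, Real.sqrt_sq hom.le]
  have hd0 : deriv h 0 ≠ 0 := by rw [hd]; exact hom.ne'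
  have hka := hh.analyticAt_localInverse hd0
  have hk0 : hh.hasStrictDerivAt.localInverse _ _ _ hd0 (h 0) = 0 :=
    HasStrictFDerivAt.localInverse_apply_image ..
  have hkr : ∀ᶠ y in 𝓝 (h 0), h (hh.hasStrictDerivAt.localInverse _ _ _ hd0 y) = y :=
    HasStrictDerivAt.eventually_right_inverse ..
  have hkd := (hh.hasStrictDerivAt.to_localInverse hd0).hasDerivAt.deriv
  rw [hh0] at hka hk0 hkr hkd
  refine ⟨_, hka, hk0, by rw [hkd, hd], ?_⟩
  have hc := hka.continuousAt.tendsto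
  rw [hk0] at hc
  filter_upwards [hkr, hc.eventually hsq] with u h1 h2
  rw [h2, h1]

/-- The time change induced by a positive periodic function. -/
lemma rb_time_change (G : ℝ → ℝ) (hG : Continuous G) (c : ℝ) (hc : 0 < c)
    (hcG : ∀ s, c ≤ G s) (hper : ∀ s, G (s + 2 * Real.pi) = G s) :
    ∃ th : ℝ → ℝ, (∀ t, HasDerivAt th (G (th t))⁻¹ t) ∧
      (∀ t, th (t + ∫ s in (0:ℝ)..(2 * Real.pi), G s) = th t + 2 * Real.pi) ∧
      Function.Surjective th := by
  set tau : ℝ → ℝ := fun x => ∫ s in (0:ℝ)..x, G s with htau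
  have hd : ∀ x, HasDerivAt tau (G x) x := fun x => hG.integral_hasStrictDerivAt 0 x |>.hasDerivAt
  have hmono : StrictMono tau := strictMono_of_hasDerivAt_pos hd
    fun x => hc.trans_le (hcG x)
  have hcont : Continuous tau := continuous_iff_continuousAt.2 fun x => (hd x).continuousAt
  have hm2 : Monotone (fun x => tau x - c * x) := by
    have hd2 : ∀ x, HasDerivAt (fun x => tau x - c * x) (G x - c) x := fun x => by
      refine ((hd x).sub ((hasDerivAt_id x).const_mul c)).congr_deriv ?_
      simp
    refine monotone_of_deriv_nonneg (fun x => (hd2 x).differentiableAt) fun x => ?_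
    rw [(hd2 x).deriv]; linarith [hcG x]
  have htau0 : tau 0 = 0 := by simp [htau]
  have htop : Tendsto tau atTop atTop := by
    refine tendsto_atTop_mono' _ ?_ (tendsto_id.const_mul_atTop hc)
    filter_upwards [eventually_ge_atTop 0] with x hx
    have := hm2 hx
    simp [htau0] at this
    simpa using this
  have hbot : Tendsto tau atBot atBot := by
    refine tendsto_atBot_mono' _ ?_ (tendsto_id.const_mul_atBot hc)
    filter_upwards [eventually_le_atBot 0] with x hx
    have := hm2 hx
    simp [htau0] at this
    simpa using this
  have hsurj := hcont.surjective htop hbot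
  let e := hmono.orderIsoOfSurjective tau hsurj
  have he : ∀ t, tau (e.symm t) = t := fun t => e.apply_symm_apply t
  refine ⟨e.symm, fun t => ?_, fun t => ?_, e.symm.surjective⟩
  · exact HasDerivAt.of_local_left_inverse e.symm.continuous.continuousAt (hd _)
      (hc.trans_le (hcG _)).ne' (Eventually.of_forall he)
  · apply hmono.injective
    rw [he]
    have hp : Function.Periodic G (2 * Real.pi) := hper
    have h1 := hp.intervalIntegral_add_eq (e.symm t) 0
    rw [zero_add] at h1
    rw [← h1]
    have h2 : t = ∫ x in (0:ℝ)..(e.symm t), G x := (he t).symm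
    conv_lhs => enter [1]; rw [h2]
    exact intervalIntegral.integral_add_adjacent_intervals (hG.intervalIntegrable _ _)
      (hG.intervalIntegrable _ _)

/-- Small periodic oscillations in a potential well. -/
lemma rb_oscillation (V f : ℝ → ℝ) (om : ℝ) (hom : 0 < om) (hV : AnalyticAt ℝ V 0)
    (hV0 : V 0 = 0) (hVf : ∀ w, HasDerivAt V (f w) w) (hf0 : f 0 = 0)
    (hf' : HasDerivAt f (om ^ 2) 0) (η : ℝ) (hη : 0 < η) :
    ∃ T > (0:ℝ), |T - 2 * Real.pi / om| < η ∧ ∃ w z : ℝ → ℝ,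
      (∀ t, HasDerivAt w (z t) t) ∧ (∀ t, HasDerivAt z (-f (w t)) t) ∧
      (∀ t, w (t + T) = w t) ∧ (∀ t, z (t + T) = z t) ∧
      (∃ t s, z t ≠ z s) ∧ ∀ t, |w t| < η ∧ |z t| < η := by
  obtain ⟨k, hk, hk0, hkd, hkV⟩ := rb_normal_form V f om hom hV hV0 hVf hf0 hf'
  have hpi := Real.pi_pos
  set ε := min (η / (4 * Real.pi)) (om⁻¹ / 2) with hε
  have hεpos : 0 < ε := by positivity
  have ev1 : ∀ᶠ u in 𝓝 (0:ℝ), |deriv k u - om⁻¹| < ε := by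
    have := hk.deriv.continuousAt
    rw [Metric.continuousAt_iff'] at this
    simpa [hkd, Real.dist_eq] using this ε hεpos
  have ev2 : ∀ᶠ u in 𝓝 (0:ℝ), |k u| < η := by
    have := hk.continuousAt
    rw [Metric.continuousAt_iff'] at this
    simpa [hk0, Real.dist_eq] using this η hη
  have ev := (((hk.eventually_analyticAt.and ev1).and ev2).and hkV.eventually_nhds)
  obtain ⟨δ, hδ, hall⟩ := Metric.eventually_nhds_iff.1 ev
  set r := min (δ / 2) (η / 2) with hr
  have hrpos : 0 < r := by positivity
  have hrδ : r < δ := (min_le_left _ _).trans_lt (by linarith)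
  have hrη : r < η := (min_le_right _ _).trans_lt (by linarith)
  have hin : ∀ s, dist (r * Real.sin s) 0 < δ := fun s => by
    rw [Real.dist_eq, sub_zero, abs_mul, abs_of_pos hrpos]
    nlinarith [Real.abs_sin_le_one s]
  set G : ℝ → ℝ := fun s => deriv k (r * Real.sin s) with hG
  have hGc : Continuous G := continuous_iff_continuousAt.2 fun s =>
    ContinuousAt.comp (f := fun s => r * Real.sin s) (hall (hin s)).1.1.1.deriv.continuousAt
      (by fun_prop)
  have hGe : ∀ s, |G s - om⁻¹| < ε := fun s => (hall (hin s)).1.1.2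
  have hcG : ∀ s, om⁻¹ / 2 ≤ G s := fun s => by
    have := (abs_lt.1 (hGe s)).1
    have : ε ≤ om⁻¹ / 2 := min_le_right _ _
    linarith
  have hompos : 0 < om⁻¹ := inv_pos.2 hom
  have hGpos : ∀ s, 0 < G s := fun s => by linarith [hcG s]
  obtain ⟨th, hth, hthT, hthS⟩ := rb_time_change G hGc (om⁻¹ / 2) (by positivity) hcG
    (fun s => by simp [hG, Real.sin_add_two_pi])
  refine ⟨∫ s in (0:ℝ)..(2 * Real.pi), G s, ?_, ?_, fun t => k (r * Real.sin (th t)),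
    fun t => r * Real.cos (th t), fun t => ?_, fun t => ?_, fun t => ?_, fun t => ?_, ?_, fun t => ?_⟩
  · exact intervalIntegral.intervalIntegral_pos_of_pos (hGc.intervalIntegrable _ _) hGpos
      (by positivity)
  · have h1 : (∫ s in (0:ℝ)..(2 * Real.pi), G s) - 2 * Real.pi / om
        = ∫ s in (0:ℝ)..(2 * Real.pi), (G s - om⁻¹) := by
      rw [intervalIntegral.integral_sub (hGc.intervalIntegrable _ _) (by simp)]
      simp [div_eq_mul_inv]
    rw [h1]
    have h2 := intervalIntegral.norm_integral_le_of_norm_le_const (a := 0) (b := 2 * Real.pi)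
      (f := fun s => G s - om⁻¹) (C := ε) (fun s _ => (hGe s).le)
    rw [Real.norm_eq_abs, sub_zero, abs_of_pos (by positivity : 0 < 2 * Real.pi)] at h2
    have h3 : ε ≤ η / (4 * Real.pi) := min_le_left _ _
    have h4 : ε * (2 * Real.pi) ≤ η / (4 * Real.pi) * (2 * Real.pi) := by gcongr
    have h5 : η / (4 * Real.pi) * (2 * Real.pi) = η / 2 := by field_simp; norm_num
    linarith
  · have h1 := (hall (hin (th t))).1.1.1.differentiableAt.hasDerivAt
    have h2 : HasDerivAt (fun t => r * Real.sin (th t)) (r * (Real.cos (th t) * (G (th t))⁻¹)) t :=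
      ((hth t).sin).const_mul r
    have h3 := HasDerivAt.comp t h1 h2
    refine h3.congr_deriv ?_
    have := (hGpos (th t)).ne'
    change G (th t) * _ = _
    field_simp
  · have h1 := (hall (hin (th t))).1.1.1.differentiableAt.hasDerivAt
    have h2 := HasDerivAt.comp _ (hVf (k (r * Real.sin (th t)))) h1
    have h3 : HasDerivAt (fun u : ℝ => u ^ 2 / 2) (r * Real.sin (th t)) (r * Real.sin (th t)) := by
      refine ((hasDerivAt_pow 2 (r * Real.sin (th t))).div_const 2).congr_deriv ?_
      simp
    have h4 := h2.unique (h3.congr_of_eventuallyEq (hall (hin (th t))).2)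
    have h5 : HasDerivAt (fun t => r * Real.cos (th t)) (r * (-Real.sin (th t) * (G (th t))⁻¹)) t :=
      ((hth t).cos).const_mul r
    refine h5.congr_deriv ?_
    have := (hGpos (th t)).ne'
    change f _ * G (th t) = _ at h4
    field_simp
    linarith
  · simp only [hthT, Real.sin_add_two_pi]
  · simp only [hthT, Real.cos_add_two_pi]
  · obtain ⟨t, ht⟩ := hthS 0
    obtain ⟨s, hs⟩ := hthS Real.pi
    refine ⟨t, s, ?_⟩
    simp [ht, hs]
    intro h
    linarith
  · refine ⟨(hall (hin (th t))).1.2, ?_⟩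
    rw [abs_mul, abs_of_pos hrpos]
    nlinarith [Real.abs_cos_le_one (th t)]


/-- Local existence of periodic orbits of the rattleback system near the stable
equilibrium `e₊ = (|M|, |M|√λ, 0)`: for every `η > 0` there are a period `T > 0` with
`|T − π√2/(|M|√(λ(λ+1)))| < η` and a nonconstant `T`-periodic solution whose orbit
lies within distance `η` of `e₊`. -/
theorem rattleback_periodic_orbits (lam : ℕ) (hlam : 2 ≤ lam) (M : ℝ) (hM : M ≠ 0) :
    ∀ η > (0 : ℝ), ∃ T > (0 : ℝ),
      |T - Real.pi * Real.sqrt 2 / (|M| * Real.sqrt ((lam : ℝ) * ((lam : ℝ) + 1)))| < η ∧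
      ∃ x y z : ℝ → ℝ,
        (∀ t : ℝ, HasDerivAt x ((lam : ℝ) * x t * z t) t) ∧
        (∀ t : ℝ, HasDerivAt y (-(y t * z t)) t) ∧
        (∀ t : ℝ, HasDerivAt z ((y t) ^ 2 - (lam : ℝ) * (x t) ^ 2) t) ∧
        (∀ t : ℝ, (x (t + T), y (t + T), z (t + T)) = (x t, y t, z t)) ∧
        (¬ ∀ t : ℝ, (x t, y t, z t) = (x 0, y 0, z 0)) ∧
        (∀ t : ℝ, Real.sqrt ((x t - |M|) ^ 2 + (y t - |M| * Real.sqrt lam) ^ 2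
          + (z t) ^ 2) < η) := by
  intro η hη
  set a := |M| with ha
  have hapos : 0 < a := abs_pos.2 hM
  set L : ℝ := (lam : ℝ) with hL
  have hLpos : 0 < L := by
    have : (2:ℝ) ≤ L := by rw [hL]; exact_mod_cast hlam
    linarith
  have hcl : ∃ ε > (0:ℝ), ∀ w z : ℝ, |w| < ε → |z| < ε →
      Real.sqrt ((a * Real.exp (L * w) - a) ^ 2
        + (a * Real.sqrt L * Real.exp (-w) - a * Real.sqrt L) ^ 2 + z ^ 2) < η := by
    have hc : Continuous (fun q : ℝ × ℝ => Real.sqrt ((a * Real.exp (L * q.1) - a) ^ 2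
        + (a * Real.sqrt L * Real.exp (-q.1) - a * Real.sqrt L) ^ 2 + q.2 ^ 2)) := by fun_prop
    have h1 := (hc.tendsto ((0:ℝ), (0:ℝ))).eventually_lt_const (u := η) (by simpa using hη)
    obtain ⟨ε, hε, h2⟩ := Metric.eventually_nhds_iff.1 h1
    refine ⟨ε, hε, fun w z hw hz => h2 (y := (w, z)) ?_⟩
    simpa [Prod.dist_eq, Real.dist_eq] using ⟨hw, hz⟩
  obtain ⟨ε, hε, hcl⟩ := hcl
  set om := a * Real.sqrt (2 * (L * (L + 1))) with hom
  have hompos : 0 < om := by positivity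
  have hom2 : om ^ 2 = a ^ 2 * (2 * (L * (L + 1))) := by
    rw [hom, mul_pow, Real.sq_sqrt (by positivity)]
  have hT0 : Real.pi * Real.sqrt 2 / (a * Real.sqrt (L * (L + 1))) = 2 * Real.pi / om := by
    rw [hom, Real.sqrt_mul (by norm_num : (0:ℝ) ≤ 2) (L * (L + 1))]
    have h2 : Real.sqrt 2 ^ 2 = 2 := Real.sq_sqrt (by norm_num)
    have : 0 < Real.sqrt (L * (L + 1)) := by positivity
    generalize Real.sqrt (L * (L + 1)) = q at *
    field_simp
    exact h2
  have hVf : ∀ w : ℝ, HasDerivAt (fun w => a ^ 2 * L * (Real.exp (2 * L * w) / (2 * L)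
      + Real.exp (-2 * w) / 2 - 1 / (2 * L) - 1 / 2))
      ((fun w => a ^ 2 * L * (Real.exp (2 * L * w) - Real.exp (-2 * w))) w) w := by
    intro w
    have h1 : HasDerivAt (fun w => Real.exp (2 * L * w)) (Real.exp (2 * L * w) * (2 * L)) w := by
      simpa using ((hasDerivAt_id w).const_mul (2 * L)).exp
    have h2 : HasDerivAt (fun w => Real.exp (-2 * w)) (Real.exp (-2 * w) * (-2)) w := by
      simpa using ((hasDerivAt_id w).const_mul (-2)).exp
    refine (((((h1.div_const (2 * L)).add (h2.div_const 2)).sub_const (1 / (2 * L))).sub_const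
      (1 / 2)).const_mul (a ^ 2 * L)).congr_deriv ?_
    field_simp
    ring
  have hf' : HasDerivAt (fun w => a ^ 2 * L * (Real.exp (2 * L * w) - Real.exp (-2 * w)))
      (om ^ 2) 0 := by
    have h1 : HasDerivAt (fun w => Real.exp (2 * L * w)) (Real.exp (2 * L * 0) * (2 * L)) 0 := by
      simpa using ((hasDerivAt_id (0:ℝ)).const_mul (2 * L)).exp
    have h2 : HasDerivAt (fun w => Real.exp (-2 * w)) (Real.exp (-2 * 0) * (-2)) 0 := by
      simpa using ((hasDerivAt_id (0:ℝ)).const_mul (-2)).exp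
    refine ((h1.sub h2).const_mul (a ^ 2 * L)).congr_deriv ?_
    rw [hom2]
    simp
    ring
  obtain ⟨T, hT, hTc, w, z, hw, hz, hwT, hzT, ⟨t₁, t₂, hne⟩, hb⟩ :=
    rb_oscillation _ _ om hompos (by fun_prop) (by simp) hVf (by simp) hf' (min η ε)
      (lt_min hη hε)
  refine ⟨T, hT, ?_, fun t => a * Real.exp (L * w t), fun t => a * Real.sqrt L * Real.exp (-w t), z,
    fun t => ?_, fun t => ?_, fun t => ?_, fun t => ?_, ?_, fun t => ?_⟩
  · rw [hT0]; exact hTc.trans_le (min_le_left _ _)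
  · refine (((hw t).const_mul L).exp.const_mul a).congr_deriv ?_
    ring
  · refine ((hw t).neg.exp.const_mul (a * Real.sqrt L)).congr_deriv ?_
    simp only [Pi.neg_apply]
    ring
  · refine (hz t).congr_deriv ?_
    have h1 : Real.exp (2 * L * w t) = Real.exp (L * w t) ^ 2 := by
      rw [← Real.exp_nat_mul]; push_cast; ring_nf
    have h2 : Real.exp (-2 * w t) = Real.exp (-w t) ^ 2 := by
      rw [← Real.exp_nat_mul]; push_cast; ring_nf
    simp only [h1, h2, mul_pow, Real.sq_sqrt hLpos.le]
    ring
  · simp only [hwT, hzT]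
  · intro h
    apply hne
    have e1 := h t₁
    have e2 := h t₂
    simp only [Prod.mk.injEq] at e1 e2
    rw [e1.2.2, e2.2.2]
  · exact hcl _ _ ((hb t).1.trans_le (min_le_right _ _)) ((hb t).2.trans_le (min_le_right _ _))
end

section
/- Let λ ≥ 2 be a natural number. The range of the energy–Casimir map EC : ℝ³ → ℝ², EC(x,y,z) = (x·y^λ, (1/2)(x² + y² + z²)), equals the set {(h, c) ∈ ℝ² : c ≥ 0 and h² ≤ λ^λ · (2/(λ+1))^{λ+1} · c^{λ+1}}. -/
/-- Weighted AM-GM in natural-power form. -/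
theorem rattleback_amgm (n : ℕ) (hn : 2 ≤ n) (a b s : ℝ) (ha : 0 ≤ a) (hb : 0 ≤ b)
    (h : a + b ≤ ((n : ℝ) + 1) * s) : a * b ^ n ≤ (n * s) ^ n * s := by
  have hn0 : (0 : ℝ) < n := by exact_mod_cast (by omega : 0 < n)
  have hn1 : (0 : ℝ) < (n : ℝ) + 1 := by positivity
  have hbn : 0 ≤ b / n := by positivity
  have key := Real.geom_mean_le_arith_mean2_weighted (w₁ := 1 / ((n : ℝ) + 1))
    (w₂ := n / ((n : ℝ) + 1)) (p₁ := a) (p₂ := b / n) (by positivity) (by positivity) ha hbn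
    (by field_simp; ring)
  have h2 : 1 / ((n : ℝ) + 1) * a + n / ((n : ℝ) + 1) * (b / n) ≤ s := by
    have : 1 / ((n : ℝ) + 1) * a + n / ((n : ℝ) + 1) * (b / n) = (a + b) / ((n : ℝ) + 1) := by
      field_simp
    rw [this, div_le_iff₀ hn1]
    linarith
  have h3 := pow_le_pow_left₀ (by positivity) (key.trans h2) (n + 1)
  have e1 : (a ^ (1 / ((n : ℝ) + 1))) ^ (n + 1) = a := by
    rw [← Real.rpow_natCast, ← Real.rpow_mul ha]
    push_cast
    rw [one_div_mul_cancel hn1.ne', Real.rpow_one]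
  have e2 : ((b / n) ^ ((n : ℝ) / ((n : ℝ) + 1))) ^ (n + 1) = (b / n) ^ n := by
    rw [← Real.rpow_natCast, ← Real.rpow_mul hbn]
    push_cast
    rw [div_mul_cancel₀ _ hn1.ne', Real.rpow_natCast]
  rw [mul_pow, e1, e2] at h3
  have e3 : b ^ n = (n : ℝ) ^ n * (b / n) ^ n := by
    rw [← mul_pow]; congr 1; field_simp
  calc a * b ^ n = (n : ℝ) ^ n * (a * (b / n) ^ n) := by rw [e3]; ring
    _ ≤ (n : ℝ) ^ n * s ^ (n + 1) := by gcongr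
    _ = _ := by rw [mul_pow]; ring

/-- The range of the energy–Casimir map `EC(x,y,z) = (x·y^λ, (1/2)(x²+y²+z²))` of the
rattleback system (with `λ ≥ 2` a natural number) equals
`{(h, c) : c ≥ 0 and h² ≤ λ^λ · (2/(λ+1))^{λ+1} · c^{λ+1}}`. -/
theorem rattleback_energy_casimir_range (lam : ℕ) (hlam : 2 ≤ lam) :
    (Set.range fun v : ℝ × ℝ × ℝ =>
        (v.1 * v.2.1 ^ lam, (1 / 2 : ℝ) * (v.1 ^ 2 + v.2.1 ^ 2 + v.2.2 ^ 2))) =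
    {p : ℝ × ℝ | 0 ≤ p.2 ∧
      p.1 ^ 2 ≤ (lam : ℝ) ^ lam * (2 / ((lam : ℝ) + 1)) ^ (lam + 1) * p.2 ^ (lam + 1)} := by
  have hn0 : (0 : ℝ) < lam := by exact_mod_cast (by omega : 0 < lam)
  have hn1 : (0 : ℝ) < (lam : ℝ) + 1 := by positivity
  have hR : ∀ c : ℝ, (lam : ℝ) ^ lam * (2 / ((lam : ℝ) + 1)) ^ (lam + 1) * c ^ (lam + 1)
      = (lam * (2 / ((lam : ℝ) + 1) * c)) ^ lam * (2 / ((lam : ℝ) + 1) * c) := by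
    intro c
    rw [mul_pow, mul_pow]; ring
  have hS : ∀ c : ℝ, ((lam : ℝ) + 1) * (2 / ((lam : ℝ) + 1) * c) = 2 * c := by
    intro c
    field_simp
  ext ⟨h, c⟩
  simp only [Set.mem_range, Set.mem_ofPred_eq, Prod.exists, Prod.mk.injEq, hR]
  constructor
  · rintro ⟨x, y, z, rfl, rfl⟩
    refine ⟨by positivity, ?_⟩
    have := rattleback_amgm lam hlam (x ^ 2) (y ^ 2) _ (sq_nonneg x) (sq_nonneg y)
      (by rw [hS (1 / 2 * (x ^ 2 + y ^ 2 + z ^ 2))]; nlinarith [sq_nonneg z])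
    calc (x * y ^ lam) ^ 2 = x ^ 2 * (y ^ 2) ^ lam := by ring
      _ ≤ _ := this
  · rintro ⟨hc, hh⟩
    have hSc := hS c
    have hs : 0 ≤ 2 / ((lam : ℝ) + 1) * c := by positivity
    have hs0 : 2 / ((lam : ℝ) + 1) * c = 0 → c = 0 := by
      intro h0; rw [h0] at hSc; linarith
    generalize 2 / ((lam : ℝ) + 1) * c = s at *
    rcases hs.eq_or_lt with h0 | h0
    · subst h0
      have hh0 : h = 0 := by
        have : h ^ 2 ≤ 0 := by simpa using hh
        exact pow_eq_zero_iff two_ne_zero |>.1 (le_antisymm this (sq_nonneg h))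
      have hl : lam ≠ 0 := by omega
      exact ⟨0, 0, 0, by simp [hh0], by simp [hs0 rfl]⟩
    · have hls : 0 < lam * s := by positivity
      have hy : 0 < √(lam * s) := Real.sqrt_pos.2 hls
      have hy2 : √(lam * s) ^ 2 = lam * s := Real.sq_sqrt hls.le
      have hx2 : (h / √(lam * s) ^ lam) ^ 2 ≤ s := by
        have e : (√(lam * s) ^ lam) ^ 2 = (lam * s) ^ lam := by
          rw [← pow_mul, mul_comm lam 2, pow_mul, hy2]
        rw [div_pow, e, div_le_iff₀ (by positivity)]
        linarith
      refine ⟨h / √(lam * s) ^ lam, √(lam * s),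
        √(2 * c - (h / √(lam * s) ^ lam) ^ 2 - √(lam * s) ^ 2), ?_, ?_⟩
      · field_simp
      · rw [Real.sq_sqrt (by rw [hy2]; linarith :
          0 ≤ 2 * c - (h / √(lam * s) ^ lam) ^ 2 - √(lam * s) ^ 2)]
        ring
end

section
/- Let λ ≥ 2 be a natural number. The image under the energy–Casimir map EC(x,y,z) = (x·y^λ, (1/2)(x²+y²+z²)) of the set of nontrivial stable equilibria {(M, M√λ, 0) : M ≠ 0} ∪ {(M, −M√λ, 0) : M ≠ 0} equals the boundary curve {(h, c) ∈ ℝ² : c > 0 and h² = λ^λ · (2/(λ+1))^{λ+1} · c^{λ+1}}. -/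
/-- The image under the energy–Casimir map `EC(x,y,z) = (x·y^λ, (1/2)(x²+y²+z²))` of the
set of nontrivial stable equilibria `{(M, ±M√λ, 0) : M ≠ 0}` of the rattleback system
equals the boundary curve `{(h, c) : c > 0, h² = λ^λ · (2/(λ+1))^{λ+1} · c^{λ+1}}`. -/
theorem rattleback_image_stable_equilibria (lam : ℕ) (hlam : 2 ≤ lam) :
    (fun v : ℝ × ℝ × ℝ =>
        (v.1 * v.2.1 ^ lam, (1 / 2 : ℝ) * (v.1 ^ 2 + v.2.1 ^ 2 + v.2.2 ^ 2))) ''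
      ({v : ℝ × ℝ × ℝ | ∃ M : ℝ, M ≠ 0 ∧ v = (M, M * Real.sqrt lam, 0)} ∪
       {v : ℝ × ℝ × ℝ | ∃ M : ℝ, M ≠ 0 ∧ v = (M, -(M * Real.sqrt lam), 0)}) =
    {p : ℝ × ℝ | 0 < p.2 ∧
      p.1 ^ 2 = (lam : ℝ) ^ lam * (2 / ((lam : ℝ) + 1)) ^ (lam + 1) * p.2 ^ (lam + 1)} := by
  have hl : (0 : ℝ) < (lam : ℝ) + 1 := by positivity
  have hs : Real.sqrt lam ^ 2 = (lam : ℝ) := Real.sq_sqrt (by positivity)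
  have key : ∀ x y : ℝ, x ≠ 0 → y ^ 2 = x ^ 2 * lam →
      0 < (1 / 2 : ℝ) * (x ^ 2 + y ^ 2 + 0 ^ 2) ∧
      (x * y ^ lam) ^ 2 = (lam : ℝ) ^ lam * (2 / ((lam : ℝ) + 1)) ^ (lam + 1) *
        ((1 / 2 : ℝ) * (x ^ 2 + y ^ 2 + 0 ^ 2)) ^ (lam + 1) := by
    intro x y hx hy
    refine ⟨by positivity, ?_⟩
    have h1 : 2 / ((lam : ℝ) + 1) * ((1 / 2 : ℝ) * (x ^ 2 + y ^ 2 + 0 ^ 2)) = x ^ 2 := by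
      rw [hy]
      field_simp
      ring
    rw [mul_assoc, ← mul_pow, h1, mul_pow, ← pow_mul, mul_comm lam 2, pow_mul, hy, mul_pow,
      pow_succ (x ^ 2)]
    ring
  ext ⟨h, c⟩
  constructor
  · rintro ⟨v, (⟨M, hM, rfl⟩ | ⟨M, hM, rfl⟩), hv⟩
    · rw [← hv]
      exact key M (M * Real.sqrt lam) hM (by rw [mul_pow, hs])
    · rw [← hv]
      exact key M (-(M * Real.sqrt lam)) hM (by rw [neg_sq, mul_pow, hs])
  · rintro ⟨hc, hh⟩
    simp only at hc hh
    have hpos : 0 < 2 * c / ((lam : ℝ) + 1) := by positivity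
    obtain ⟨m, hm, hm2⟩ : ∃ m : ℝ, 0 < m ∧ m ^ 2 = 2 * c / ((lam : ℝ) + 1) :=
      ⟨_, Real.sqrt_pos.2 hpos, Real.sq_sqrt hpos.le⟩
    have hy : (m * Real.sqrt lam) ^ 2 = m ^ 2 * lam := by rw [mul_pow, hs]
    have hcm : (1 / 2 : ℝ) * (m ^ 2 + (m * Real.sqrt lam) ^ 2 + 0 ^ 2) = c := by
      rw [hy, hm2]
      field_simp
      ring
    have h2 := (key m (m * Real.sqrt lam) hm.ne' hy).2
    rw [hcm, ← hh] at h2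
    rcases sq_eq_sq_iff_eq_or_eq_neg.1 h2.symm with h3 | h3
    · exact ⟨(m, m * Real.sqrt lam, 0), Or.inl ⟨m, hm.ne', rfl⟩, Prod.ext h3.symm hcm⟩
    · refine ⟨(-m, m * Real.sqrt lam, 0), Or.inr ⟨-m, neg_ne_zero.2 hm.ne', ?_⟩,
        Prod.ext ?_ ?_⟩
      · simp
      · simp [h3]
      · simpa only [neg_sq] using hcm
end

section
/- Let λ ≥ 2 be a natural number and M > 0. The fiber of the energy–Casimir map over the point (M^{λ+1}·(√λ)^λ, (λ+1)M²/2), i.e. the set {(x, y, z) ∈ ℝ³ : x·y^λ = M^{λ+1}·(√λ)^λ and (1/2)(x² + y² + z²) = (λ+1)M²/2}, consists of exactly the two points (M, M√λ, 0) and ((−1)^λ·M, −M√λ, 0), and both points are equilibria of the rattleback system. -/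
/-- For `M > 0`, the fiber of the energy–Casimir map `EC(x,y,z) = (x·y^λ, (1/2)(x²+y²+z²))`
over `(M^{λ+1}(√λ)^λ, (λ+1)M²/2)` consists of exactly the two points `(M, M√λ, 0)` and
`((−1)^λ M, −M√λ, 0)`, both of which are equilibria of the rattleback system. -/
theorem rattleback_fiber_over_sigma_s (lam : ℕ) (hlam : 2 ≤ lam) (M : ℝ) (hM : 0 < M) :
    {v : ℝ × ℝ × ℝ | v.1 * v.2.1 ^ lam = M ^ (lam + 1) * (Real.sqrt lam) ^ lam ∧
        (1 / 2 : ℝ) * (v.1 ^ 2 + v.2.1 ^ 2 + v.2.2 ^ 2) = ((lam : ℝ) + 1) * M ^ 2 / 2} =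
      ({(M, M * Real.sqrt lam, 0), ((-1 : ℝ) ^ lam * M, -(M * Real.sqrt lam), 0)} :
        Set (ℝ × ℝ × ℝ)) ∧
    ∀ v ∈ ({(M, M * Real.sqrt lam, 0), ((-1 : ℝ) ^ lam * M, -(M * Real.sqrt lam), 0)} :
        Set (ℝ × ℝ × ℝ)),
      (lam : ℝ) * v.1 * v.2.2 = 0 ∧ v.2.1 * v.2.2 = 0 ∧
        v.2.1 ^ 2 - (lam : ℝ) * v.1 ^ 2 = 0 := by
  have hL : (0 : ℝ) < lam := by
    have : 0 < lam := by omega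
    exact_mod_cast this
  have hs : 0 < Real.sqrt lam := Real.sqrt_pos.mpr hL
  have hs2 : Real.sqrt lam ^ 2 = (lam : ℝ) := Real.sq_sqrt hL.le
  generalize Real.sqrt lam = s at *
  have h1 : ((-1 : ℝ) ^ lam) * (-1) ^ lam = 1 := by
    rw [← mul_pow]; norm_num
  have hw : 0 < M * s := mul_pos hM hs
  have hR : M ^ (lam + 1) * s ^ lam = M * (M * s) ^ lam := by
    rw [mul_pow, pow_succ]; ring
  constructor
  · ext ⟨x, y, z⟩
    simp only [Set.mem_ofPred_eq, Set.mem_insert_iff, Set.mem_singleton_iff, Prod.mk.injEq]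
    rw [hR]
    constructor
    · rintro ⟨hH, hC⟩
      have hy : y ≠ 0 := by
        rintro rfl
        rw [zero_pow (by omega), mul_zero] at hH
        have : 0 < M * (M * s) ^ lam := by positivity
        linarith
      have hy2 : 0 < y ^ 2 := by positivity
      obtain ⟨c, hc⟩ : ∃ c, c = (M * s) ^ 2 / y ^ 2 := ⟨_, rfl⟩
      have hcpos : 0 < c := by rw [hc]; positivity
      have hcy : c * y ^ 2 = lam * M ^ 2 := by
        rw [hc, ← hs2]; field_simp
      have hx2 : x ^ 2 = M ^ 2 * c ^ lam := by
        have : x ^ 2 * (y ^ 2) ^ lam = M ^ 2 * ((M * s) ^ 2) ^ lam := by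
          rw [← pow_mul, ← pow_mul, mul_comm 2 lam, pow_mul, pow_mul, ← mul_pow, ← mul_pow, hH]
        rw [hc, div_pow]
        rw [← mul_div_assoc, eq_div_iff (by positivity)]
        exact this
      have hb : 1 + (lam : ℝ) * (c - 1) ≤ c ^ lam := by
        have := one_add_mul_le_pow (a := c - 1) (by linarith) lam
        simpa using this
      have hb2 : M ^ 2 * (1 + (lam : ℝ) * (c - 1)) ≤ x ^ 2 := by
        rw [hx2]; gcongr
      have h3 : M ^ 2 * lam * (c - 2) + y ^ 2 + z ^ 2 ≤ 0 := by nlinarith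
      have h4 : M ^ 2 * lam * (c - 1) ^ 2 + c * z ^ 2 ≤ 0 := by
        have := mul_nonpos_of_nonneg_of_nonpos hcpos.le h3
        nlinarith
      have hp : 0 < M ^ 2 * (lam : ℝ) := by positivity
      have hc1 : c = 1 := by
        have h5 : 0 ≤ c * z ^ 2 := by positivity
        have h6 : (c - 1) ^ 2 ≤ 0 := by
          by_contra h
          push Not at h
          have := mul_pos hp h
          linarith
        have := pow_eq_zero_iff (two_ne_zero) |>.mp (le_antisymm h6 (sq_nonneg _))
        linarith
      subst hc1
      have hz : z = 0 := by
        have : z ^ 2 ≤ 0 := by linarith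
        exact pow_eq_zero_iff (two_ne_zero) |>.mp (le_antisymm this (sq_nonneg _))
      have hyw : y ^ 2 = (M * s) ^ 2 := by rw [mul_pow, hs2]; linarith
      have hwp : (M * s) ^ lam ≠ 0 := by positivity
      rcases sq_eq_sq_iff_eq_or_eq_neg.mp hyw with h | h
      · left
        refine ⟨?_, h, hz⟩
        rw [h] at hH
        exact mul_right_cancel₀ hwp hH
      · right
        refine ⟨?_, h, hz⟩
        rw [h, neg_pow, ← mul_assoc] at hH
        have := mul_right_cancel₀ hwp hH
        rw [← this]
        linear_combination (-x) * h1
    · rintro (⟨rfl, rfl, rfl⟩ | ⟨rfl, rfl, rfl⟩)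
      · refine ⟨rfl, ?_⟩
        linear_combination (1 / 2 * x ^ 2) * hs2
      · constructor
        · rw [neg_pow]
          linear_combination (M * (M * s) ^ lam) * h1
        · linear_combination (1 / 2 * M ^ 2) * hs2 + (1 / 2 * M ^ 2) * h1
  · rintro ⟨x, y, z⟩ hv
    simp only [Set.mem_insert_iff, Set.mem_singleton_iff, Prod.mk.injEq] at hv
    rcases hv with ⟨rfl, rfl, rfl⟩ | ⟨rfl, rfl, rfl⟩
    · refine ⟨by simp, by simp, ?_⟩
      linear_combination (x ^ 2) * hs2
    · refine ⟨by simp, by simp, ?_⟩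
      linear_combination (M ^ 2) * hs2 - (lam * M ^ 2) * h1
end

section
/- Let λ ≥ 2 be a natural number and let (h, c) ∈ ℝ² satisfy c > 0, h ≠ 0 and h² < λ^λ · (2/(λ+1))^{λ+1} · c^{λ+1}. Then the fiber {(x, y, z) ∈ ℝ³ : x·y^λ = h and (1/2)(x² + y² + z²) = c} of the energy–Casimir map, with its subspace topology from ℝ³, is homeomorphic to the disjoint union of two copies of the unit circle. -/
noncomputable def rbF (lam : ℕ) (h : ℝ) (w : ℂ) : ℝ :=
  Real.exp (2 * w.re) + h ^ 2 * Real.exp (-(2 * lam) * w.re) + w.im ^ 2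

lemma rbF_cont (lam : ℕ) (h : ℝ) : Continuous (rbF lam h) := by
  unfold rbF
  fun_prop

lemma rb_exp_conv (a : ℝ) : ConvexOn ℝ Set.univ (fun w : ℂ => Real.exp (a * w.re)) := by
  have := convexOn_exp.comp_linearMap (a • Complex.reLm)
  simpa [Function.comp_def] using this

lemma rbF_conv (lam : ℕ) (h : ℝ) : ConvexOn ℝ Set.univ (rbF lam h) := by
  have h3 : ConvexOn ℝ Set.univ (fun w : ℂ => w.im ^ 2) := by
    have := (even_two.convexOn_pow (𝕜 := ℝ)).comp_linearMap Complex.imLm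
    simpa [Function.comp_def] using this
  have h2 := (rb_exp_conv (-(2 * lam))).smul (sq_nonneg h)
  exact ((rb_exp_conv 2).add h2).add h3

lemma rb_frontier (lam : ℕ) (h c : ℝ) (hne : ∃ w, rbF lam h w < 2 * c) :
    frontier {w | rbF lam h w < 2 * c} = {w | rbF lam h w = 2 * c} := by
  apply Set.Subset.antisymm
  · exact frontier_lt_subset_eq (rbF_cont lam h) continuous_const
  · intro w hw
    obtain ⟨p, hp⟩ := hne
    have hw' : rbF lam h w = 2 * c := hw
    have hopen : IsOpen {w | rbF lam h w < 2 * c} :=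
      isOpen_lt (rbF_cont lam h) continuous_const
    rw [hopen.frontier_eq]
    refine ⟨?_, by simp [hw']⟩
    have hlim : Filter.Tendsto (fun t : ℝ => (1 - t) • w + t • p) (nhdsWithin 0 (Set.Ioo 0 1))
        (nhds w) := by
      have : Continuous (fun t : ℝ => (1 - t) • w + t • p) := by fun_prop
      have h0 := this.tendsto 0
      simp only [sub_zero, one_smul, zero_smul, add_zero] at h0
      exact h0.mono_left nhdsWithin_le_nhds
    have : (nhdsWithin (0 : ℝ) (Set.Ioo 0 1)).NeBot := by
      rw [← mem_closure_iff_nhdsWithin_neBot, closure_Ioo (by norm_num)]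
      simp
    refine mem_closure_of_tendsto hlim ?_
    filter_upwards [self_mem_nhdsWithin] with t ht
    have := (rbF_conv lam h).2 (Set.mem_univ w) (Set.mem_univ p)
      (sub_nonneg.2 ht.2.le) ht.1.le (by ring)
    simp only [smul_eq_mul, hw'] at this
    show rbF lam h _ < 2 * c
    nlinarith [ht.1]

lemma rb_nonempty (lam : ℕ) (hlam : 2 ≤ lam) (h c : ℝ) (hc : 0 < c)
    (hlt : h ^ 2 < (lam : ℝ) ^ lam * (2 / ((lam : ℝ) + 1)) ^ (lam + 1) * c ^ (lam + 1)) :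
    ∃ w, rbF lam h w < 2 * c := by
  have hl : (0 : ℝ) < lam := by exact_mod_cast (by omega : 0 < lam)
  set u : ℝ := 2 * c * lam / (lam + 1) with hu
  have hupos : 0 < u := by positivity
  refine ⟨((Real.log u / 2 : ℝ) : ℂ), ?_⟩
  have e1 : Real.exp (2 * (Real.log u / 2)) = u := by
    rw [mul_div_cancel₀ _ (by norm_num : (2 : ℝ) ≠ 0), Real.exp_log hupos]
  have e2 : Real.exp (-(2 * lam) * (Real.log u / 2)) = (u ^ lam)⁻¹ := by
    rw [show -(2 * (lam : ℝ)) * (Real.log u / 2) = -(lam * Real.log u) by ring, Real.exp_neg,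
      Real.exp_nat_mul, Real.exp_log hupos]
  simp only [rbF, Complex.ofReal_re, Complex.ofReal_im, e1, e2]
  have hup : 0 < u ^ lam := by positivity
  have key : h ^ 2 < (2 * c / (lam + 1)) * u ^ lam := by
    refine hlt.trans_eq ?_
    rw [hu]
    simp only [div_pow, mul_pow, pow_succ]
    field_simp
  have : h ^ 2 * (u ^ lam)⁻¹ < 2 * c / (lam + 1) := by
    rw [← div_eq_mul_inv, div_lt_iff₀ hup]; exact key
  have : u + 2 * c / (lam + 1) = 2 * c := by rw [hu]; field_simp
  norm_num
  linarith

lemma rb_bounded (lam : ℕ) (hlam : 2 ≤ lam) (h c : ℝ) (hc : 0 < c) (hh : h ≠ 0) :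
    Bornology.IsBounded {w | rbF lam h w < 2 * c} := by
  have hl : (0 : ℝ) < lam := by exact_mod_cast (by omega : 0 < lam)
  have hh2 : 0 < h ^ 2 := by positivity
  have hb : Bornology.IsBounded
      ((Set.Icc (-(2 * c / h ^ 2)) (2 * c)) ×ℂ (Set.Icc (-(2 * c + 1)) (2 * c + 1))) :=
    (Metric.isBounded_Icc _ _).reProdIm (Metric.isBounded_Icc _ _)
  refine hb.subset ?_
  intro w hw
  have hw : rbF lam h w < 2 * c := hw
  unfold rbF at hw
  have p1 := Real.exp_pos (2 * w.re)
  have p2 : 0 < h ^ 2 * Real.exp (-(2 * lam) * w.re) := by positivity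
  have q1 := Real.add_one_le_exp (2 * w.re)
  have q2 := Real.add_one_le_exp (-(2 * lam) * w.re)
  have r2 : Real.exp (-(2 * lam) * w.re) < 2 * c / h ^ 2 := by
    rw [lt_div_iff₀ hh2]; nlinarith [sq_nonneg w.im]
  have hl1 : (1 : ℝ) ≤ lam := by exact_mod_cast (by omega : 1 ≤ lam)
  rw [Complex.mem_reProdIm]
  refine ⟨⟨?_, ?_⟩, ⟨?_, ?_⟩⟩
  · by_contra hcon
    have hcon := not_le.1 hcon
    have : 0 < 2 * c / h ^ 2 := by positivity
    nlinarith
  · by_contra hcon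
    nlinarith [sq_nonneg w.im]
  · nlinarith [sq_nonneg w.im]
  · nlinarith [sq_nonneg w.im]

lemma rb_homeo (lam : ℕ) (hlam : 2 ≤ lam) (h c : ℝ) (hc : 0 < c) (hh : h ≠ 0)
    (hlt : h ^ 2 < (lam : ℝ) ^ lam * (2 / ((lam : ℝ) + 1)) ^ (lam + 1) * c ^ (lam + 1)) :
    Nonempty ({w // rbF lam h w = 2 * c} ≃ₜ {p : ℝ × ℝ // p.1 ^ 2 + p.2 ^ 2 = 1}) := by
  have hne := rb_nonempty lam hlam h c hc hlt
  have hopen : IsOpen {w | rbF lam h w < 2 * c} :=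
    isOpen_lt (rbF_cont lam h) continuous_const
  have hconv : Convex ℝ {w | rbF lam h w < 2 * c} := by
    simpa using (rbF_conv lam h).convex_lt (2 * c)
  obtain ⟨e, -, -, he⟩ := exists_homeomorph_image_interior_closure_frontier_eq_unitBall hconv
    (by rw [hopen.interior_eq]; exact hne) (rb_bounded lam hlam h c hc hh)
  rw [rb_frontier lam h c hne] at he
  have h1 : ∀ w, rbF lam h w = 2 * c ↔ e w ∈ Metric.sphere (0 : ℂ) 1 := by
    intro w
    rw [← he, e.injective.mem_set_image]; rfl
  have h2 : ∀ w : ℂ, w ∈ Metric.sphere (0 : ℂ) 1 ↔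
      (Complex.equivRealProdCLM.toHomeomorph w).1 ^ 2
        + (Complex.equivRealProdCLM.toHomeomorph w).2 ^ 2 = 1 := by
    intro w
    rw [mem_sphere_zero_iff_norm, ← sq_eq_sq₀ (norm_nonneg _) zero_le_one, Complex.sq_norm,
      Complex.normSq_apply]
    simp [sq]
  exact ⟨(e.subtype h1).trans (Complex.equivRealProdCLM.toHomeomorph.subtype h2)⟩

lemma rb_mem (lam : ℕ) (h c ε : ℝ) (hε : ε ^ 2 = 1) (w : ℂ) (hw : rbF lam h w = 2 * c) :
    (h * ε ^ lam * Real.exp (-lam * w.re)) * (ε * Real.exp w.re) ^ lam = h ∧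
    (1 / 2 : ℝ) * ((h * ε ^ lam * Real.exp (-lam * w.re)) ^ 2 + (ε * Real.exp w.re) ^ 2
      + w.im ^ 2) = c := by
  have e1 : (ε ^ lam) ^ 2 = 1 := by rw [← pow_mul, mul_comm, pow_mul, hε, one_pow]
  have e2 : Real.exp (-lam * w.re) * Real.exp w.re ^ lam = 1 := by
    rw [← Real.exp_nat_mul, ← Real.exp_add]; simp
  have e3 : Real.exp (-lam * w.re) ^ 2 = Real.exp (-(2 * lam) * w.re) := by
    rw [← Real.exp_nat_mul]; congr 1; push_cast; ring
  have e4 : Real.exp w.re ^ 2 = Real.exp (2 * w.re) := by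
    rw [← Real.exp_nat_mul]; congr 1
  constructor
  · rw [mul_pow]
    linear_combination h * e1 * (Real.exp (-lam * w.re) * Real.exp w.re ^ lam) + h * e2
  · unfold rbF at hw
    rw [mul_pow, mul_pow, mul_pow, e1, e3, e4, hε]
    linarith

lemma rb_surj (lam : ℕ) (h c ε x y z : ℝ) (hε : ε ^ 2 = 1) (hy : 0 < ε * y)
    (h1 : x * y ^ lam = h) (h2 : (1 / 2 : ℝ) * (x ^ 2 + y ^ 2 + z ^ 2) = c) :
    ∃ w : ℂ, rbF lam h w = 2 * c ∧ h * ε ^ lam * Real.exp (-lam * w.re) = x ∧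
      ε * Real.exp w.re = y ∧ w.im = z := by
  have e0 : Real.exp (Real.log (ε * y)) = ε * y := Real.exp_log hy
  have ey : ε * (ε * y) = y := by linear_combination y * hε
  have ex : h * ε ^ lam * Real.exp (-lam * Real.log (ε * y)) = x := by
    rw [neg_mul, Real.exp_neg, Real.exp_nat_mul, e0, ← h1, ← div_eq_mul_inv,
      div_eq_iff (by positivity), mul_pow]
    ring
  refine ⟨⟨Real.log (ε * y), z⟩, ?_, ex, by rw [e0, ey], rfl⟩
  have e1 : (ε ^ lam) ^ 2 = 1 := by rw [← pow_mul, mul_comm, pow_mul, hε, one_pow]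
  have e3 : Real.exp (-(2 * lam) * Real.log (ε * y)) = Real.exp (-lam * Real.log (ε * y)) ^ 2 := by
    rw [← Real.exp_nat_mul]; congr 1; push_cast; ring
  have e4 : Real.exp (2 * Real.log (ε * y)) = y ^ 2 := by
    have := Real.exp_nat_mul (Real.log (ε * y)) 2
    push_cast at this
    rw [this, e0, mul_pow, hε, one_mul]
  simp only [rbF, e3, e4]
  have : x ^ 2 = h ^ 2 * Real.exp (-lam * Real.log (ε * y)) ^ 2 := by
    rw [← ex]
    linear_combination h ^ 2 * Real.exp (-lam * Real.log (ε * y)) ^ 2 * e1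
  linarith

/-- For a regular value `(h, c)` with `c > 0`, `h ≠ 0` and
`h² < λ^λ (2/(λ+1))^{λ+1} c^{λ+1}`, the fiber of the energy–Casimir map of the
rattleback system over `(h, c)` is homeomorphic to the disjoint union of two circles. -/
theorem rattleback_fiber_two_circles (lam : ℕ) (hlam : 2 ≤ lam) (h c : ℝ)
    (hc : 0 < c) (hh : h ≠ 0)
    (hlt : h ^ 2 < (lam : ℝ) ^ lam * (2 / ((lam : ℝ) + 1)) ^ (lam + 1) * c ^ (lam + 1)) :
    Nonempty
      (({v : ℝ × ℝ × ℝ // v.1 * v.2.1 ^ lam = h ∧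
          (1 / 2 : ℝ) * (v.1 ^ 2 + v.2.1 ^ 2 + v.2.2 ^ 2) = c}) ≃ₜ
        ({p : ℝ × ℝ // p.1 ^ 2 + p.2 ^ 2 = 1} ⊕ {p : ℝ × ℝ // p.1 ^ 2 + p.2 ^ 2 = 1})) := by
  obtain ⟨ψ⟩ := rb_homeo lam hlam h c hc hh hlt
  have hcomp : CompactSpace {w // rbF lam h w = 2 * c} := by
    have hcl : IsClosed {w | rbF lam h w = 2 * c} := isClosed_eq (rbF_cont lam h) continuous_const
    have hb : Bornology.IsBounded {w | rbF lam h w = 2 * c} :=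
      (rb_bounded lam hlam h (c + 1) (by linarith) hh).subset (by
        intro w hw
        have hw : rbF lam h w = 2 * c := hw
        show rbF lam h w < 2 * (c + 1)
        linarith)
    exact isCompact_iff_compactSpace.1 (Metric.isCompact_of_isClosed_isBounded hcl hb)
  let g : ∀ ε : ℝ, ε ^ 2 = 1 → {w // rbF lam h w = 2 * c} →
      {v : ℝ × ℝ × ℝ // v.1 * v.2.1 ^ lam = h ∧
          (1 / 2 : ℝ) * (v.1 ^ 2 + v.2.1 ^ 2 + v.2.2 ^ 2) = c} := fun ε hε w =>
    ⟨(h * ε ^ lam * Real.exp (-lam * w.1.re), ε * Real.exp w.1.re, w.1.im),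
      rb_mem lam h c ε hε w.1 w.2⟩
  have gcont : ∀ ε hε, Continuous (g ε hε) := by
    intro ε hε
    apply Continuous.subtype_mk
    fun_prop
  have ginj : ∀ ε hε, Function.Injective (g ε hε) := by
    intro ε hε a b hab
    have hab := congrArg Subtype.val hab
    simp only [g, Prod.mk.injEq] at hab
    have hε0 : ε ≠ 0 := by rintro rfl; norm_num at hε
    have := Real.exp_injective (mul_left_cancel₀ hε0 hab.2.1)
    exact Subtype.ext (Complex.ext this hab.2.2)
  let G := Sum.elim (g 1 (by norm_num)) (g (-1) (by norm_num))
  have Gcont : Continuous G := (gcont 1 (by norm_num)).sumElim (gcont (-1) (by norm_num))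
  have Gbij : Function.Bijective G := by
    constructor
    · refine (ginj 1 (by norm_num)).sumElim (ginj (-1) (by norm_num)) ?_
      intro a b hab
      have hab := congrArg Subtype.val hab
      simp only [g, Prod.mk.injEq] at hab
      have p1 := Real.exp_pos a.1.re
      have p2 := Real.exp_pos b.1.re
      linarith [hab.2.1]
    · rintro ⟨⟨x, y, z⟩, h1, h2⟩
      simp only at h1 h2
      have hy : y ≠ 0 := by
        rintro rfl
        rw [zero_pow (by omega), mul_zero] at h1
        exact hh h1.symm
      rcases lt_or_gt_of_ne hy with hy | hy
      · obtain ⟨w, hw, a1, a2, a3⟩ := rb_surj lam h c (-1) x y z (by norm_num) (by linarith) h1 h2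
        exact ⟨Sum.inr ⟨w, hw⟩, Subtype.ext (by simp only [G, g, Sum.elim_inr, a1, a2, a3])⟩
      · obtain ⟨w, hw, a1, a2, a3⟩ := rb_surj lam h c 1 x y z (by norm_num) (by linarith) h1 h2
        exact ⟨Sum.inl ⟨w, hw⟩, Subtype.ext (by simp only [G, g, Sum.elim_inl, a1, a2, a3])⟩
  let Φ := Continuous.homeoOfEquivCompactToT2 (f := Equiv.ofBijective G Gbij) Gcont
  exact ⟨Φ.symm.trans (ψ.sumCongr ψ)⟩
end

section
/- Let λ ≥ 2 be a natural number, M ∈ ℝ with M ≠ 0, and k ∈ ℝ. Define y(t) = 2M² / ((M² + 1)·cosh(|M|(t + k)) + (M² − 1)·sinh(|M|(t + k))) and z(t) = |M|·(−1 + M²·cosh(2|M|(t + k)) + M²·sinh(2|M|(t + k))) / (1 + M²·cosh(2|M|(t + k)) + M²·sinh(2|M|(t + k))). Then t ↦ (0, y(t), z(t)) is a solution of the rattleback system, it tends to the unstable equilibrium (0, 0, −|M|) as t → −∞, and it tends to the unstable equilibrium (0, 0, |M|) as t → +∞ (so it is a heteroclinic solution connecting these two equilibria). -/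
open Real Filter

/-- The explicit curve `t ↦ (0, y(t), z(t))` is a heteroclinic solution of the rattleback
system `ẋ = λxz, ẏ = −yz, ż = y² − λx²`, connecting the unstable equilibria
`(0, 0, −|M|)` (as `t → −∞`) and `(0, 0, |M|)` (as `t → +∞`). -/
theorem rattleback_heteroclinic_y (lam : ℕ) (hlam : 2 ≤ lam) (M k : ℝ) (hM : M ≠ 0)
    (y z : ℝ → ℝ)
    (hy : ∀ t : ℝ, y t = 2 * M ^ 2 /
      ((M ^ 2 + 1) * Real.cosh (|M| * (t + k)) + (M ^ 2 - 1) * Real.sinh (|M| * (t + k))))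
    (hz : ∀ t : ℝ, z t = |M| *
        (-1 + M ^ 2 * Real.cosh (2 * |M| * (t + k)) + M ^ 2 * Real.sinh (2 * |M| * (t + k))) /
        (1 + M ^ 2 * Real.cosh (2 * |M| * (t + k)) + M ^ 2 * Real.sinh (2 * |M| * (t + k)))) :
    (∀ t : ℝ, HasDerivAt (fun _ : ℝ => (0 : ℝ)) ((lam : ℝ) * 0 * z t) t) ∧
    (∀ t : ℝ, HasDerivAt y (-(y t * z t)) t) ∧
    (∀ t : ℝ, HasDerivAt z ((y t) ^ 2 - (lam : ℝ) * (0 : ℝ) ^ 2) t) ∧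
    Tendsto (fun t : ℝ => ((0 : ℝ), y t, z t)) atBot (nhds (0, 0, -|M|)) ∧
    Tendsto (fun t : ℝ => ((0 : ℝ), y t, z t)) atTop (nhds (0, 0, |M|)) := by
  have ha : 0 < |M| := abs_pos.mpr hM
  have hsq : |M| ^ 2 = M ^ 2 := sq_abs M
  have hM2 : 0 < M ^ 2 := by positivity
  have hy' : ∀ t : ℝ, y t = 2 * M ^ 2 * exp (|M| * (t + k)) /
      (M ^ 2 * exp (|M| * (t + k)) ^ 2 + 1) := by
    intro t
    have hE := exp_pos (|M| * (t + k))
    have h1 : (M ^ 2 + 1) * Real.cosh (|M| * (t + k)) + (M ^ 2 - 1) * Real.sinh (|M| * (t + k))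
        = (M ^ 2 * exp (|M| * (t + k)) ^ 2 + 1) / exp (|M| * (t + k)) := by
      rw [Real.cosh_eq, Real.sinh_eq, Real.exp_neg]
      field_simp
      ring
    rw [hy, h1, div_div_eq_mul_div]
  have hz' : ∀ t : ℝ, z t = |M| * (M ^ 2 * exp (|M| * (t + k)) ^ 2 - 1) /
      (M ^ 2 * exp (|M| * (t + k)) ^ 2 + 1) := by
    intro t
    have h2 : exp (|M| * (t + k)) ^ 2
        = Real.cosh (2 * |M| * (t + k)) + Real.sinh (2 * |M| * (t + k)) := by
      rw [Real.cosh_add_sinh, ← Real.exp_nat_mul]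
      congr 1
      push_cast
      ring
    rw [hz, h2]
    congr 1 <;> ring
  have hE' : ∀ t : ℝ, HasDerivAt (fun t : ℝ => exp (|M| * (t + k)))
      (exp (|M| * (t + k)) * |M|) t := by
    intro t
    have h := (((hasDerivAt_id t).add_const k).const_mul |M|).exp
    simpa using h
  refine ⟨?_, ?_, ?_, ?_, ?_⟩
  · intro t
    simpa using hasDerivAt_const t (0 : ℝ)
  · intro t
    have hD : M ^ 2 * exp (|M| * (t + k)) ^ 2 + 1 ≠ 0 := by positivity
    have h := ((hE' t).const_mul (2 * M ^ 2)).fun_div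
      ((((hE' t).fun_pow 2).const_mul (M ^ 2)).add_const 1) hD
    rw [hy' t, hz' t, funext hy']
    refine h.congr_deriv ?_
    field_simp
    push_cast
    ring
  · intro t
    have hD : M ^ 2 * exp (|M| * (t + k)) ^ 2 + 1 ≠ 0 := by positivity
    have h := (((((hE' t).fun_pow 2).const_mul (M ^ 2)).sub_const 1).const_mul |M|).fun_div
      ((((hE' t).fun_pow 2).const_mul (M ^ 2)).add_const 1) hD
    rw [hy' t, funext hz']
    refine h.congr_deriv ?_
    rw [← hsq] at hD ⊢
    field_simp
    push_cast
    ring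
  · have hE0 : Tendsto (fun t : ℝ => exp (|M| * (t + k))) atBot (nhds 0) :=
      tendsto_exp_atBot.comp
        ((tendsto_atBot_add_const_right _ k tendsto_id).const_mul_atBot ha)
    have c1 : ContinuousAt (fun E : ℝ => 2 * M ^ 2 * E / (M ^ 2 * E ^ 2 + 1)) 0 := by
      apply ContinuousAt.div (by fun_prop) (by fun_prop)
      simp
    have c2 : ContinuousAt (fun E : ℝ => |M| * (M ^ 2 * E ^ 2 - 1) / (M ^ 2 * E ^ 2 + 1)) 0 := by
      apply ContinuousAt.div (by fun_prop) (by fun_prop)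
      simp
    have l1 := c1.tendsto.comp hE0
    have l2 := c2.tendsto.comp hE0
    rw [funext hy', funext hz']
    refine tendsto_const_nhds.prodMk_nhds (Tendsto.prodMk_nhds ?_ ?_)
    · simpa [Function.comp_def] using l1
    · simpa [Function.comp_def] using l2
  · have hE0 : Tendsto (fun t : ℝ => (exp (|M| * (t + k)))⁻¹) atTop (nhds 0) :=
      tendsto_inv_atTop_zero.comp (tendsto_exp_atTop.comp
        ((tendsto_atTop_add_const_right _ k tendsto_id).const_mul_atTop ha))
    have c1 : ContinuousAt (fun F : ℝ => 2 * M ^ 2 * F / (M ^ 2 + F ^ 2)) 0 := by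
      apply ContinuousAt.div (by fun_prop) (by fun_prop)
      simpa using hM
    have c2 : ContinuousAt (fun F : ℝ => |M| * (M ^ 2 - F ^ 2) / (M ^ 2 + F ^ 2)) 0 := by
      apply ContinuousAt.div (by fun_prop) (by fun_prop)
      simpa using hM
    have l1 := c1.tendsto.comp hE0
    have l2 := c2.tendsto.comp hE0
    refine tendsto_const_nhds.prodMk_nhds (Tendsto.prodMk_nhds ?_ ?_)
    · have e : (0 : ℝ) = 2 * M ^ 2 * 0 / (M ^ 2 + 0 ^ 2) := by simp
      rw [e]
      refine l1.congr fun t => ?_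
      rw [hy' t]
      have hE := exp_pos (|M| * (t + k))
      simp only [Function.comp_apply]
      field_simp
    · have e : |M| = |M| * (M ^ 2 - 0 ^ 2) / (M ^ 2 + 0 ^ 2) := by
        field_simp
        ring
      have l3 : Tendsto z atTop (nhds (|M| * (M ^ 2 - 0 ^ 2) / (M ^ 2 + 0 ^ 2))) := by
        refine l2.congr fun t => ?_
        rw [hz' t]
        have hE := exp_pos (|M| * (t + k))
        simp only [Function.comp_apply]
        field_simp
      rwa [← e] at l3
end

section
/- Let λ ≥ 2 be a natural number, M ∈ ℝ with M ≠ 0, and k ∈ ℝ. Define x(t) = 2M²·(cosh(|M|(λt + k)) + sinh(|M|(λt + k))) / (M²·cosh(2|M|k) + cosh(2|M|λt) + M²·sinh(2|M|k) + sinh(2|M|λt)) and z̃(t) = |M|·(M²·cosh(2|M|k) − cosh(2|M|λt) + M²·sinh(2|M|k) − sinh(2|M|λt)) / (M²·cosh(2|M|k) + cosh(2|M|λt) + M²·sinh(2|M|k) + sinh(2|M|λt)). Then t ↦ (x(t), 0, z̃(t)) is a solution of the rattleback system, it tends to the unstable equilibrium (0, 0, |M|) as t → −∞, and it tends to the unstable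 equilibrium (0, 0, −|M|) as t → +∞ (so it is a heteroclinic solution connecting these two equilibria). -/
open Real Filter

theorem tendsto_eq_lim {f : ℝ → ℝ} {l : Filter ℝ} {b c : ℝ} (h : Tendsto f l (nhds b))
    (e : nhds b = nhds c) : Tendsto f l (nhds c) := e ▸ h

/-- The explicit curve `t ↦ (x(t), 0, z̃(t))` is a heteroclinic solution of the rattleback
system `ẋ = λxz, ẏ = −yz, ż = y² − λx²`, connecting the unstable equilibria
`(0, 0, |M|)` (as `t → −∞`) and `(0, 0, −|M|)` (as `t → +∞`). -/
theorem rattleback_heteroclinic_x (lam : ℕ) (hlam : 2 ≤ lam) (M k : ℝ) (hM : M ≠ 0)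
    (x zt : ℝ → ℝ)
    (hx : ∀ t : ℝ, x t = 2 * M ^ 2 *
        (Real.cosh (|M| * ((lam : ℝ) * t + k)) + Real.sinh (|M| * ((lam : ℝ) * t + k))) /
        (M ^ 2 * Real.cosh (2 * |M| * k) + Real.cosh (2 * |M| * (lam : ℝ) * t) +
          M ^ 2 * Real.sinh (2 * |M| * k) + Real.sinh (2 * |M| * (lam : ℝ) * t)))
    (hzt : ∀ t : ℝ, zt t = |M| *
        (M ^ 2 * Real.cosh (2 * |M| * k) - Real.cosh (2 * |M| * (lam : ℝ) * t) +
          M ^ 2 * Real.sinh (2 * |M| * k) - Real.sinh (2 * |M| * (lam : ℝ) * t)) /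
        (M ^ 2 * Real.cosh (2 * |M| * k) + Real.cosh (2 * |M| * (lam : ℝ) * t) +
          M ^ 2 * Real.sinh (2 * |M| * k) + Real.sinh (2 * |M| * (lam : ℝ) * t))) :
    (∀ t : ℝ, HasDerivAt x ((lam : ℝ) * x t * zt t) t) ∧
    (∀ t : ℝ, HasDerivAt (fun _ : ℝ => (0 : ℝ)) (-((0 : ℝ) * zt t)) t) ∧
    (∀ t : ℝ, HasDerivAt zt ((0 : ℝ) ^ 2 - (lam : ℝ) * (x t) ^ 2) t) ∧
    Tendsto (fun t : ℝ => (x t, (0 : ℝ), zt t)) atBot (nhds (0, 0, |M|)) ∧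
    Tendsto (fun t : ℝ => (x t, (0 : ℝ), zt t)) atTop (nhds (0, 0, -|M|)) := by
  have hm : 0 < |M| := abs_pos.mpr hM
  have hm2 : |M| ^ 2 = M ^ 2 := sq_abs M
  have hl : (0 : ℝ) < lam := by exact_mod_cast (by omega : 0 < lam)
  have hM2 : 0 < M ^ 2 := by positivity
  set m := |M| with hmdef
  set a := Real.exp (m * k) with ha
  have hapos : 0 < a := Real.exp_pos _
  have hcs : ∀ u : ℝ, Real.cosh u + Real.sinh u = Real.exp u := Real.cosh_add_sinh
  have ha2 : Real.exp (2 * m * k) = a ^ 2 := by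
    rw [ha, ← Real.exp_nat_mul]; congr 1; push_cast; ring
  have hE2 : ∀ t : ℝ, Real.exp (2 * m * lam * t) = Real.exp (m * lam * t) ^ 2 := by
    intro t
    rw [← Real.exp_nat_mul]; congr 1; push_cast; ring
  have hDpos : ∀ t : ℝ, 0 < M ^ 2 * a ^ 2 + Real.exp (m * lam * t) ^ 2 := by
    intro t; positivity
  have hD : ∀ t : ℝ, M ^ 2 * Real.cosh (2 * m * k) + Real.cosh (2 * m * (lam : ℝ) * t) +
          M ^ 2 * Real.sinh (2 * m * k) + Real.sinh (2 * m * (lam : ℝ) * t) =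
          M ^ 2 * a ^ 2 + Real.exp (m * lam * t) ^ 2 := by
    intro t
    rw [← hE2, ← ha2, ← hcs, ← hcs]; ring
  have hN : ∀ t : ℝ, M ^ 2 * Real.cosh (2 * m * k) - Real.cosh (2 * m * (lam : ℝ) * t) +
          M ^ 2 * Real.sinh (2 * m * k) - Real.sinh (2 * m * (lam : ℝ) * t) =
          M ^ 2 * a ^ 2 - Real.exp (m * lam * t) ^ 2 := by
    intro t
    rw [← hE2, ← ha2, ← hcs, ← hcs]; ring
  have hx1 : ∀ t : ℝ, x t = 2 * M ^ 2 * (a * Real.exp (m * lam * t)) /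
      (M ^ 2 * a ^ 2 + Real.exp (m * lam * t) ^ 2) := by
    intro t
    rw [hx, hD, hcs, ha, ← Real.exp_add]
    congr 3; ring_nf
  have hz1 : ∀ t : ℝ, zt t = m * (M ^ 2 * a ^ 2 - Real.exp (m * lam * t) ^ 2) /
      (M ^ 2 * a ^ 2 + Real.exp (m * lam * t) ^ 2) := by
    intro t
    rw [hzt, hD, hN]
  have hE' : ∀ t : ℝ, HasDerivAt (fun t : ℝ => Real.exp (m * lam * t))
      (Real.exp (m * lam * t) * (m * lam)) t := by
    intro t
    simpa using ((hasDerivAt_id t).const_mul (m * lam)).exp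
  have hxf := funext hx1
  have hzf := funext hz1
  have hc : 0 < m * lam := by positivity
  have hden : M ^ 2 * a ^ 2 + (0 : ℝ) ^ 2 ≠ 0 := by positivity
  refine ⟨fun t => ?_, fun t => ?_, fun t => ?_, ?_, ?_⟩
  · have h := (((hE' t).const_mul a).const_mul (2 * M ^ 2)).div
      (((hE' t).pow 2).const_add (M ^ 2 * a ^ 2)) (hDpos t).ne'
    rw [hx1 t, hz1 t, hxf]
    refine h.congr_deriv ?_
    have := (hDpos t).ne'
    simp only [Pi.pow_apply]
    field_simp
    push_cast
    ring
  · simpa using hasDerivAt_const t (0 : ℝ)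
  · have h := ((((hE' t).pow 2).const_sub (M ^ 2 * a ^ 2)).const_mul m).div
      (((hE' t).pow 2).const_add (M ^ 2 * a ^ 2)) (hDpos t).ne'
    rw [hx1 t, hzf]
    refine h.congr_deriv ?_
    have := (hDpos t).ne'
    simp only [Pi.pow_apply]
    field_simp
    push_cast
    generalize Real.exp (m * lam * t) = E
    linear_combination (-4 * lam * E ^ 2 * M ^ 2 * a ^ 2) * hm2
  · have hE0 : Tendsto (fun t : ℝ => Real.exp (m * lam * t)) atBot (nhds 0) :=
      Real.tendsto_exp_atBot.comp (tendsto_id.const_mul_atBot hc)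
    refine Tendsto.prodMk_nhds ?_ (tendsto_const_nhds.prodMk_nhds ?_)
    · rw [hxf]
      have h := ((hE0.const_mul a).const_mul (2 * M ^ 2)).div
        ((hE0.pow 2).const_add (M ^ 2 * a ^ 2)) hden
      exact tendsto_eq_lim h (congrArg nhds (by simp))
    · rw [hzf]
      have h := (((hE0.pow 2).const_sub (M ^ 2 * a ^ 2)).const_mul m).div
        ((hE0.pow 2).const_add (M ^ 2 * a ^ 2)) hden
      refine tendsto_eq_lim h (congrArg nhds ?_)
      rw [zero_pow two_ne_zero, sub_zero, add_zero]
      field_simp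
  · have hF0 : Tendsto (fun t : ℝ => (Real.exp (m * lam * t))⁻¹) atTop (nhds 0) :=
      (Real.tendsto_exp_atTop.comp (tendsto_id.const_mul_atTop hc)).inv_tendsto_atTop
    have hden1 : M ^ 2 * a ^ 2 * (0 : ℝ) ^ 2 + 1 ≠ 0 := by simp
    refine Tendsto.prodMk_nhds ?_ (tendsto_const_nhds.prodMk_nhds ?_)
    · have h := ((hF0.const_mul a).const_mul (2 * M ^ 2)).div
        (((hF0.pow 2).const_mul (M ^ 2 * a ^ 2)).add_const 1) hden1
      have h2 : x = fun t => 2 * M ^ 2 * (a * (Real.exp (m * lam * t))⁻¹) /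
          (M ^ 2 * a ^ 2 * (Real.exp (m * lam * t))⁻¹ ^ 2 + 1) := by
        funext t
        rw [hx1]
        have := (hDpos t).ne'
        have hp := Real.exp_pos (m * lam * t)
        generalize Real.exp (m * lam * t) = E at *
        field_simp
      rw [h2]
      exact tendsto_eq_lim h (congrArg nhds (by simp))
    · have h := ((((hF0.pow 2).const_mul (M ^ 2 * a ^ 2)).sub_const 1).const_mul m).div
        (((hF0.pow 2).const_mul (M ^ 2 * a ^ 2)).add_const 1) hden1
      have h2 : zt = fun t => m * (M ^ 2 * a ^ 2 * (Real.exp (m * lam * t))⁻¹ ^ 2 - 1) /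
          (M ^ 2 * a ^ 2 * (Real.exp (m * lam * t))⁻¹ ^ 2 + 1) := by
        funext t
        rw [hz1]
        have := (hDpos t).ne'
        have hp := Real.exp_pos (m * lam * t)
        generalize Real.exp (m * lam * t) = E at *
        field_simp
      rw [h2]
      exact tendsto_eq_lim h (congrArg nhds (by simp))
end

section
/- Let λ ≥ 2 be a natural number and let (x(t), y(t), z(t)) be a solution of the rattleback system. Define the 3×3 real matrices L(t) and B(t) by: L is skew-symmetric with L₁₂ = −x + y√λ, L₁₃ = x√λ + y, L₂₃ = z√(λ+1) (and L₂₁ = −L₁₂, L₃₁ = −L₁₃, L₃₂ = −L₂₃, zero diagonal), where x = x(t), y = y(t), z = z(t); and B is skew-symmetric with B₁₂ = (−x√λ + y)·√(λ+1), B₁₃ = 0, B₂₃ = z√λ (and B₂₁ = −B₁₂, B₃₁ = 0, B₃₂ = −B₂₃, zero diagonal). Then t ↦ L(t) is differentiable and satisfies the Lax equation L'(t) = L(t)·B(t) − B(t)·L(t) for all t ∈ ℝ. -/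
/-- Lax formulation of the rattleback system: along any solution of
`ẋ = λxz, ẏ = −yz, ż = y² − λx²`, the matrix `L(t)` satisfies (entrywise)
the Lax equation `L' = L·B − B·L`. -/
theorem rattleback_lax_formulation (lam : ℕ) (hlam : 2 ≤ lam)
    (x y z : ℝ → ℝ)
    (hx : ∀ t : ℝ, HasDerivAt x ((lam : ℝ) * x t * z t) t)
    (hy : ∀ t : ℝ, HasDerivAt y (-(y t * z t)) t)
    (hz : ∀ t : ℝ, HasDerivAt z ((y t) ^ 2 - (lam : ℝ) * (x t) ^ 2) t)
    (L B : ℝ → Matrix (Fin 3) (Fin 3) ℝ)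
    (hL : ∀ t : ℝ, L t =
      !![0, -(x t) + y t * Real.sqrt lam, x t * Real.sqrt lam + y t;
         x t - y t * Real.sqrt lam, 0, z t * Real.sqrt ((lam : ℝ) + 1);
         -(x t * Real.sqrt lam) - y t, -(z t * Real.sqrt ((lam : ℝ) + 1)), 0])
    (hB : ∀ t : ℝ, B t =
      !![0, (-(x t * Real.sqrt lam) + y t) * Real.sqrt ((lam : ℝ) + 1), 0;
         (x t * Real.sqrt lam - y t) * Real.sqrt ((lam : ℝ) + 1), 0, z t * Real.sqrt lam;
         0, -(z t * Real.sqrt lam), 0]) :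
    ∀ t : ℝ, ∀ i j : Fin 3,
      HasDerivAt (fun s : ℝ => L s i j) ((L t * B t - B t * L t) i j) t := by
  intro t i j
  have h1 : Real.sqrt (lam : ℝ) ^ 2 = lam := Real.sq_sqrt (by positivity)
  have h2 : Real.sqrt ((lam : ℝ) + 1) ^ 2 = lam + 1 := Real.sq_sqrt (by positivity)
  simp only [hL, hB]
  generalize Real.sqrt (lam : ℝ) = s at *
  generalize Real.sqrt ((lam : ℝ) + 1) = r at *
  have hx := hx t
  have hy := hy t
  have hz := hz t
  have d12 := hx.neg.add (hy.mul_const s)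
  have d13 := (hx.mul_const s).add hy
  have d21 := hx.sub (hy.mul_const s)
  have d31 := (hx.mul_const s).neg.sub hy
  have d23 := hz.mul_const r
  have d32 := (hz.mul_const r).neg
  have d0 := hasDerivAt_const t (0 : ℝ)
  fin_cases i <;> fin_cases j
  · refine d0.congr_deriv ?_
    simp [Matrix.mul_apply, Fin.sum_univ_three]; try ring
  · refine d12.congr_deriv ?_
    simp [Matrix.mul_apply, Fin.sum_univ_three]
    linear_combination (x t * z t) * h1
  · refine d13.congr_deriv ?_
    simp [Matrix.mul_apply, Fin.sum_univ_three]
    linear_combination (-(y t * z t)) * h1 + (y t - x t * s) * z t * h2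
  · refine d21.congr_deriv ?_
    simp [Matrix.mul_apply, Fin.sum_univ_three]
    linear_combination (-(x t * z t)) * h1
  · refine d0.congr_deriv ?_
    simp [Matrix.mul_apply, Fin.sum_univ_three]; try ring
  · refine d23.congr_deriv ?_
    simp [Matrix.mul_apply, Fin.sum_univ_three]
    linear_combination (x t ^ 2 * r) * h1
  · refine d31.congr_deriv ?_
    simp [Matrix.mul_apply, Fin.sum_univ_three]
    linear_combination (y t * z t) * h1 - (y t - x t * s) * z t * h2
  · refine d32.congr_deriv ?_
    simp [Matrix.mul_apply, Fin.sum_univ_three]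
    linear_combination (-(x t ^ 2 * r)) * h1
  · refine d0.congr_deriv ?_
    simp [Matrix.mul_apply, Fin.sum_univ_three]; try ring
end

section
/- Let λ ≥ 2 be a natural number, ε > 0 and h ∈ ℝ. For every solution (x(t), y(t), z(t)) of the perturbed rattleback system ẋ = λxz + ε(xy^λ − h)·y^{λ−1}·y(λx² − y² − z²), ẏ = −yz + ε(xy^λ − h)·y^{λ−1}·x(−λx² + y² − λz²), ż = y² − λx² + ε(xy^λ − h)·y^{λ−1}·(λ+1)xyz, the Casimir function C(t) := (1/2)(x(t)² + y(t)² + z(t)²) is constant in t, i.e. C remains a first integral of the perturbed system. -/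
/-- The Casimir `C = (1/2)(x² + y² + z²)` remains a first integral of the perturbed
rattleback system
`ẋ = λxz + ε(xy^λ − h)y^{λ−1}·y(λx² − y² − z²)`,
`ẏ = −yz + ε(xy^λ − h)y^{λ−1}·x(−λx² + y² − λz²)`,
`ż = y² − λx² + ε(xy^λ − h)y^{λ−1}·(λ+1)xyz`. -/
theorem rattleback_perturbed_casimir_constant (lam : ℕ) (hlam : 2 ≤ lam)
    (ε : ℝ) (hε : 0 < ε) (h : ℝ)
    (x y z : ℝ → ℝ)
    (hx : ∀ t : ℝ, HasDerivAt x ((lam : ℝ) * x t * z t +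
      ε * (x t * (y t) ^ lam - h) * (y t) ^ (lam - 1) *
        (y t * ((lam : ℝ) * (x t) ^ 2 - (y t) ^ 2 - (z t) ^ 2))) t)
    (hy : ∀ t : ℝ, HasDerivAt y (-(y t * z t) +
      ε * (x t * (y t) ^ lam - h) * (y t) ^ (lam - 1) *
        (x t * (-(lam : ℝ) * (x t) ^ 2 + (y t) ^ 2 - (lam : ℝ) * (z t) ^ 2))) t)
    (hz : ∀ t : ℝ, HasDerivAt z ((y t) ^ 2 - (lam : ℝ) * (x t) ^ 2 +
      ε * (x t * (y t) ^ lam - h) * (y t) ^ (lam - 1) *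
        (((lam : ℝ) + 1) * x t * y t * z t)) t) :
    ∀ t : ℝ, (1 / 2 : ℝ) * ((x t) ^ 2 + (y t) ^ 2 + (z t) ^ 2)
      = (1 / 2 : ℝ) * ((x 0) ^ 2 + (y 0) ^ 2 + (z 0) ^ 2) := by
  have hC : ∀ t : ℝ, HasDerivAt
      (fun t => (1 / 2 : ℝ) * ((x t) ^ 2 + (y t) ^ 2 + (z t) ^ 2)) 0 t := by
    intro t
    have key := ((((hx t).pow 2).add ((hy t).pow 2)).add ((hz t).pow 2)).const_mul (1 / 2 : ℝ)
    refine key.congr_deriv ?_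
    generalize ε * (x t * (y t) ^ lam - h) * (y t) ^ (lam - 1) = g
    push_cast
    ring
  intro t
  exact is_const_of_deriv_eq_zero (fun s => (hC s).differentiableAt)
    (fun s => (hC s).deriv) t 0
end

section
/- Let λ ≥ 2 be a natural number, ε > 0 and h ∈ ℝ. For every solution (x(t), y(t), z(t)) of the perturbed rattleback system ẋ = λxz + ε(xy^λ − h)·y^{λ−1}·y(λx² − y² − z²), ẏ = −yz + ε(xy^λ − h)·y^{λ−1}·x(−λx² + y² − λz²), ż = y² − λx² + ε(xy^λ − h)·y^{λ−1}·(λ+1)xyz, the function t ↦ (x(t)·y(t)^λ − h)² is differentiable with derivative d/dt (x y^λ − h)² = −2ε·y^{2(λ−1)}·(xy^λ − h)²·(λ²x²z² + y²z² + (y² − λx²)²); in particular this derivative is ≤ 0 for all t, so t ↦ (x(t)·y(t)^λ − h)² is nonincreasing. -/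
/-- Along any solution of the perturbed rattleback system, the function
`t ↦ (x y^λ − h)²` has derivative
`−2ε y^{2(λ−1)} (xy^λ − h)² (λ²x²z² + y²z² + (y² − λx²)²) ≤ 0`,
hence is nonincreasing. -/
theorem rattleback_perturbed_lyapunov_decay (lam : ℕ) (hlam : 2 ≤ lam)
    (ε : ℝ) (hε : 0 < ε) (h : ℝ)
    (x y z : ℝ → ℝ)
    (hx : ∀ t : ℝ, HasDerivAt x ((lam : ℝ) * x t * z t +
      ε * (x t * (y t) ^ lam - h) * (y t) ^ (lam - 1) *
        (y t * ((lam : ℝ) * (x t) ^ 2 - (y t) ^ 2 - (z t) ^ 2))) t)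
    (hy : ∀ t : ℝ, HasDerivAt y (-(y t * z t) +
      ε * (x t * (y t) ^ lam - h) * (y t) ^ (lam - 1) *
        (x t * (-(lam : ℝ) * (x t) ^ 2 + (y t) ^ 2 - (lam : ℝ) * (z t) ^ 2))) t)
    (hz : ∀ t : ℝ, HasDerivAt z ((y t) ^ 2 - (lam : ℝ) * (x t) ^ 2 +
      ε * (x t * (y t) ^ lam - h) * (y t) ^ (lam - 1) *
        (((lam : ℝ) + 1) * x t * y t * z t)) t) :
    (∀ t : ℝ, HasDerivAt (fun s : ℝ => (x s * (y s) ^ lam - h) ^ 2)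
      (-2 * ε * (y t) ^ (2 * (lam - 1)) * (x t * (y t) ^ lam - h) ^ 2 *
        ((lam : ℝ) ^ 2 * (x t) ^ 2 * (z t) ^ 2 + (y t) ^ 2 * (z t) ^ 2 +
          ((y t) ^ 2 - (lam : ℝ) * (x t) ^ 2) ^ 2)) t) ∧
    (∀ t : ℝ,
      -2 * ε * (y t) ^ (2 * (lam - 1)) * (x t * (y t) ^ lam - h) ^ 2 *
        ((lam : ℝ) ^ 2 * (x t) ^ 2 * (z t) ^ 2 + (y t) ^ 2 * (z t) ^ 2 +
          ((y t) ^ 2 - (lam : ℝ) * (x t) ^ 2) ^ 2) ≤ 0) ∧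
    Antitone (fun t : ℝ => (x t * (y t) ^ lam - h) ^ 2) := by
  have hder : ∀ t : ℝ, HasDerivAt (fun s : ℝ => (x s * (y s) ^ lam - h) ^ 2)
      (-2 * ε * (y t) ^ (2 * (lam - 1)) * (x t * (y t) ^ lam - h) ^ 2 *
        ((lam : ℝ) ^ 2 * (x t) ^ 2 * (z t) ^ 2 + (y t) ^ 2 * (z t) ^ 2 +
          ((y t) ^ 2 - (lam : ℝ) * (x t) ^ 2) ^ 2)) t := by
    intro t
    have h1 := (((hx t).mul ((hy t).pow lam)).sub_const h).pow 2
    refine h1.congr_deriv ?_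
    obtain ⟨k, rfl⟩ : ∃ k, lam = k + 1 := ⟨lam - 1, by omega⟩
    simp only [Nat.add_sub_cancel, Pi.mul_apply, Pi.pow_apply]
    push_cast
    ring
  have hle : ∀ t : ℝ,
      -2 * ε * (y t) ^ (2 * (lam - 1)) * (x t * (y t) ^ lam - h) ^ 2 *
        ((lam : ℝ) ^ 2 * (x t) ^ 2 * (z t) ^ 2 + (y t) ^ 2 * (z t) ^ 2 +
          ((y t) ^ 2 - (lam : ℝ) * (x t) ^ 2) ^ 2) ≤ 0 := by
    intro t
    have h2 : 0 ≤ 2 * ε * (y t) ^ (2 * (lam - 1)) * (x t * (y t) ^ lam - h) ^ 2 *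
        ((lam : ℝ) ^ 2 * (x t) ^ 2 * (z t) ^ 2 + (y t) ^ 2 * (z t) ^ 2 +
          ((y t) ^ 2 - (lam : ℝ) * (x t) ^ 2) ^ 2) := by
      rw [pow_mul]
      positivity
    linarith
  refine ⟨hder, hle, antitone_of_deriv_nonpos (fun t => (hder t).differentiableAt) ?_⟩
  intro t
  rw [(hder t).deriv]
  exact hle t
end

section
/- Let λ ≥ 2 be an even natural number, M ∈ ℝ with M ≠ 0, ε > 0, and set h = |M|^{λ+1}·(√λ)^λ and e₊ = (|M|, |M|√λ, 0). Consider the perturbed rattleback system p₋: ẋ = λxz + ε(xy^λ − h)·y^{λ−1}·y(λx² − y² − z²), ẏ = −yz + ε(xy^λ − h)·y^{λ−1}·x(−λx² + y² − λz²), ż = y² − λx² + ε(xy^λ − h)·y^{λ−1}·(λ+1)xyz. Then e₊ is an equilibrium of p₋ which is asymptotically stable with respect to perturbations along the invariant sphere S = {(x,y,z) ∈ ℝ³ : x² + y² + z² = (λ+1)M²}; that is: (i) for every ε' > 0 there exists δ > 0 such that every solution of p₋ with initial condition in S at distance < δ from e₊ stays at distance < ε' from e₊ for all t ≥ 0, and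 (ii) there exists δ₀ > 0 such that every solution of p₋ with initial condition in S at distance < δ₀ from e₊ converges to e₊ as t → +∞. -/
open Filter

/-- Lyapunov stability from a Lyapunov function `V` with compact relevant set `S`. -/
theorem rb_stab {E : Type*} [TopologicalSpace E] (S : Set E) (hS : IsCompact S)
    (D V W : E → ℝ) (hD : Continuous D) (hV : Continuous V)
    (hW0 : ∀ p ∈ S, 0 ≤ W p)
    (hD0 : ∀ p ∈ S, D p ≤ 0 → V p = 0) (r : ℝ) (hr : 0 < r)
    (hVp : ∀ p ∈ S, 0 < D p → D p ≤ r → 0 < V p) (η : ℝ) (hη : 0 < η) :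
    ∃ δ > 0, ∀ γ : ℝ → E, Continuous γ → (∀ t, γ t ∈ S) →
      (∀ t, HasDerivAt (fun s => V (γ s)) (-(W (γ t))) t) →
      ∀ t₀, D (γ t₀) < δ → ∀ t ≥ t₀, D (γ t) < η := by
  -- the radius
  obtain ⟨ρ, hρ0, hρr, hρη⟩ : ∃ ρ, 0 < ρ ∧ ρ ≤ r ∧ ρ ≤ η :=
    ⟨min r η, lt_min hr hη, min_le_left _ _, min_le_right _ _⟩
  have hK : IsCompact (S ∩ {p | D p = ρ}) :=
    hS.inter_right (isClosed_eq hD continuous_const)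
  obtain ⟨m, hm0, hm⟩ : ∃ m, 0 < m ∧ ∀ p ∈ S, D p = ρ → m ≤ V p := by
    rcases (S ∩ {p | D p = ρ}).eq_empty_or_nonempty with he | hne
    · exact ⟨1, one_pos, fun p hp hd => by
        have : p ∈ S ∩ {p | D p = ρ} := ⟨hp, hd⟩
        rw [he] at this
        exact this.elim⟩
    · obtain ⟨q, hq, hmin⟩ := hK.exists_isMinOn hne hV.continuousOn
      refine ⟨V q, hVp q hq.1 ?_ ?_, fun p hp hd => hmin ⟨hp, hd⟩⟩
      · rw [hq.2]; exact hρ0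
      · rw [hq.2]; exact hρr
  have hK2 : IsCompact (S ∩ {p | m ≤ V p}) :=
    hS.inter_right (isClosed_le continuous_const hV)
  obtain ⟨d, hd0, hd⟩ : ∃ d, 0 < d ∧ ∀ p ∈ S, D p < d → V p < m := by
    rcases (S ∩ {p | m ≤ V p}).eq_empty_or_nonempty with he | hne
    · refine ⟨1, one_pos, fun p hp _ => ?_⟩
      by_contra hcon
      have : p ∈ S ∩ {p | m ≤ V p} := ⟨hp, not_lt.mp hcon⟩
      rw [he] at this
      exact this.elim
    · obtain ⟨q, hq, hmin⟩ := hK2.exists_isMinOn hne hD.continuousOn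
      refine ⟨D q, ?_, fun p hp hlt => ?_⟩
      · by_contra hcon
        have h1 := hD0 q hq.1 (not_lt.mp hcon)
        have h2 : m ≤ V q := hq.2
        linarith
      · by_contra hcon
        have : D q ≤ D p := hmin ⟨hp, not_lt.mp hcon⟩
        linarith
  refine ⟨min d ρ, lt_min hd0 hρ0, fun γ hγ hγS hder t₀ ht₀ t ht => ?_⟩
  have hanti : Antitone (fun s => V (γ s)) :=
    antitone_of_hasDerivAt_nonpos hder (fun s => by have := hW0 _ (hγS s); simpa using this)
  by_contra hcon
  have hc : ρ ≤ D (γ t) := hρη.trans (not_lt.mp hcon)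
  have hiv := intermediate_value_Icc ht (hD.comp hγ).continuousOn
  obtain ⟨s, hs, hsρ⟩ := hiv ⟨(ht₀.trans_le (min_le_right _ _)).le, hc⟩
  have h1 := hm _ (hγS s) hsρ
  have h2 := hd _ (hγS t₀) (ht₀.trans_le (min_le_left _ _))
  have h3 : V (γ s) ≤ V (γ t₀) := hanti hs.1
  linarith

/-- Attractivity. -/
theorem rb_attr {E : Type*} [TopologicalSpace E] (S : Set E) (hS : IsCompact S)
    (D V W : E → ℝ) (hD : Continuous D) (hV : Continuous V) (hW : Continuous W)
    (hV0 : ∀ p ∈ S, 0 ≤ V p) (hW0 : ∀ p ∈ S, 0 ≤ W p)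
    (hD0 : ∀ p ∈ S, D p ≤ 0 → V p = 0) (r : ℝ) (hr : 0 < r)
    (hVp : ∀ p ∈ S, 0 < D p → D p ≤ r → 0 < V p)
    (hWp : ∀ p ∈ S, 0 < D p → D p ≤ r → 0 < W p) :
    ∃ δ > 0, ∀ γ : ℝ → E, Continuous γ → (∀ t, γ t ∈ S) →
      (∀ t, HasDerivAt (fun s => V (γ s)) (-(W (γ t))) t) →
      D (γ 0) < δ → ∀ η > 0, ∃ T, ∀ t ≥ T, D (γ t) < η := by
  obtain ⟨δ, hδ, hst⟩ := rb_stab S hS D V W hD hV hW0 hD0 r hr hVp r hr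
  refine ⟨δ, hδ, fun γ hγ hγS hder h0 η hη => ?_⟩
  obtain ⟨δ', hδ', hst'⟩ := rb_stab S hS D V W hD hV hW0 hD0 r hr hVp η hη
  have hball := hst γ hγ hγS hder 0 h0
  by_contra hcon
  have hfar : ∀ t, δ' ≤ D (γ t) := by
    intro t
    by_contra hlt
    exact hcon ⟨t, hst' γ hγ hγS hder t (not_le.mp hlt)⟩
  have hK : IsCompact (S ∩ {p | δ' ≤ D p ∧ D p ≤ r}) :=
    hS.inter_right ((isClosed_le continuous_const hD).inter (isClosed_le hD continuous_const))
  obtain ⟨q, hq, hmin⟩ := hK.exists_isMinOn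
    ⟨γ 0, hγS 0, hfar 0, (hball 0 le_rfl).le⟩ hW.continuousOn
  have hc : 0 < W q := hWp q hq.1 (hδ'.trans_le hq.2.1) hq.2.2
  have hle : ∀ t ≥ 0, W q ≤ W (γ t) := fun t ht => hmin ⟨hγS t, hfar t, (hball t ht).le⟩
  have hanti : AntitoneOn (fun s => V (γ s) + W q * s) (Set.Ici 0) := by
    have hd : ∀ t, HasDerivAt (fun s => V (γ s) + W q * s) (-(W (γ t)) + W q) t := fun t => by
      exact ((hder t).add ((hasDerivAt_id t).const_mul (W q))).congr_deriv (by ring)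
    apply antitoneOn_of_deriv_nonpos (convex_Ici 0)
    · exact fun t _ => (hd t).continuousAt.continuousWithinAt
    · exact fun t _ => (hd t).differentiableAt.differentiableWithinAt
    · intro t ht
      rw [interior_Ici] at ht
      rw [(hd t).deriv]
      have := hle t (le_of_lt ht)
      linarith
  have hT : 0 ≤ (V (γ 0) + 1) / W q := by
    have := hV0 _ (hγS 0)
    positivity
  have h1 : V (γ ((V (γ 0) + 1) / W q)) + W q * ((V (γ 0) + 1) / W q) ≤ V (γ 0) + W q * 0 :=
    hanti (Set.mem_Ici.mpr le_rfl) hT hT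
  rw [mul_div_cancel₀ _ hc.ne'] at h1
  have := hV0 _ (hγS ((V (γ 0) + 1) / W q))
  linarith

/-- Strict maximality of `x y^λ` on the sphere in the positive quadrant. -/
theorem rb_max (lam : ℕ) (hlam : 2 ≤ lam) (m s x y z : ℝ) (hm : 0 < m) (hs : 0 < s)
    (hs2 : s ^ 2 = lam) (hx : 0 < x) (hy : 0 < y)
    (hsp : x ^ 2 + y ^ 2 + z ^ 2 = ((lam : ℝ) + 1) * m ^ 2)
    (hge : m ^ (lam + 1) * s ^ lam ≤ x * y ^ lam) : x = m ∧ y = m * s ∧ z = 0 := by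
  have hl : (0 : ℝ) < lam := by exact_mod_cast (by omega : 0 < lam)
  obtain ⟨a, ha⟩ : ∃ a, a = x / m := ⟨_, rfl⟩
  obtain ⟨b, hb⟩ : ∃ b, b = y / (m * s) := ⟨_, rfl⟩
  have ha0 : 0 < a := by rw [ha]; positivity
  have hb0 : 0 < b := by rw [hb]; positivity
  have hxa : x = a * m := by rw [ha]; field_simp
  have hyb : y = b * (m * s) := by rw [hb]; field_simp
  have hab : 1 ≤ a * b ^ lam := by
    have : x * y ^ lam = (a * b ^ lam) * (m ^ (lam + 1) * s ^ lam) := by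
      rw [hxa, hyb, mul_pow, mul_pow]; ring
    rw [this] at hge
    exact le_of_mul_le_mul_right (by linarith) (by positivity : 0 < m ^ (lam + 1) * s ^ lam)
  have hlog : 0 ≤ Real.log (a ^ 2) + lam * Real.log (b ^ 2) := by
    have h1 := Real.log_nonneg hab
    rw [Real.log_mul ha0.ne' (by positivity), Real.log_pow] at h1
    rw [Real.log_pow, Real.log_pow]
    push_cast
    linarith
  have hsum : (a ^ 2 + lam * b ^ 2) * m ^ 2 + z ^ 2 = ((lam : ℝ) + 1) * m ^ 2 := by
    rw [← hsp, hxa, hyb, ← hs2]; ring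
  have h2 : a ^ 2 + lam * b ^ 2 ≤ lam + 1 :=
    le_of_mul_le_mul_right (by nlinarith [sq_nonneg z]) (by positivity : 0 < m ^ 2)
  have la := Real.log_le_sub_one_of_pos (by positivity : 0 < a ^ 2)
  have lb := Real.log_le_sub_one_of_pos (by positivity : 0 < b ^ 2)
  have lb' := mul_le_mul_of_nonneg_left lb hl.le
  have ha1 : a ^ 2 = 1 := by
    by_contra hne
    have := Real.log_lt_sub_one_of_pos (by positivity : 0 < a ^ 2) hne
    linarith
  have hb1 : b ^ 2 = 1 := by
    by_contra hne
    have := Real.log_lt_sub_one_of_pos (by positivity : 0 < b ^ 2) hne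
    have := mul_lt_mul_of_pos_left this hl
    linarith
  have ha2 : a = 1 := by nlinarith
  have hb2 : b = 1 := by nlinarith
  refine ⟨by rw [hxa, ha2, one_mul], by rw [hyb, hb2, one_mul], ?_⟩
  rw [ha2, hb2] at hsum
  have : z ^ 2 = 0 := by linarith
  exact pow_eq_zero_iff (two_ne_zero) |>.mp this

theorem rb_max_le (lam : ℕ) (hlam : 2 ≤ lam) (hev : Even lam) (m s x y z : ℝ) (hm : 0 < m)
    (hs : 0 < s) (hs2 : s ^ 2 = lam)
    (hsp : x ^ 2 + y ^ 2 + z ^ 2 = ((lam : ℝ) + 1) * m ^ 2) :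
    x * y ^ lam ≤ m ^ (lam + 1) * s ^ lam := by
  have hC : 0 < m ^ (lam + 1) * s ^ lam := by positivity
  by_contra hcon
  have hlt := not_le.mp hcon
  have hyp : 0 ≤ y ^ lam := hev.pow_nonneg y
  have hx : 0 < x := by
    by_contra hx
    nlinarith [mul_nonneg (neg_nonneg.mpr (not_lt.mp hx)) hyp]
  have hy : y ≠ 0 := by
    rintro rfl
    rw [zero_pow (by omega)] at hlt
    linarith
  have hab : |y| ^ lam = y ^ lam := hev.pow_abs y
  obtain ⟨h1, h2, -⟩ := rb_max lam hlam m s x |y| z hm hs hs2 hx (abs_pos.mpr hy)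
    (by rw [sq_abs]; exact hsp) (by rw [hab]; exact hlt.le)
  rw [← hab, h1, h2, mul_pow] at hlt
  have : m * (m ^ lam * s ^ lam) = m ^ (lam + 1) * s ^ lam := by ring
  linarith

/-- The Lyapunov function along the flow. -/
def rbV (lam : ℕ) (h : ℝ) (p : ℝ × ℝ × ℝ) : ℝ := h - p.1 * p.2.1 ^ lam

/-- Its dissipation. -/
def rbW (lam : ℕ) (ε h : ℝ) (p : ℝ × ℝ × ℝ) : ℝ :=
  ε * (h - p.1 * p.2.1 ^ lam) * (p.2.1 ^ (lam - 1)) ^ 2 *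
    ((p.2.1 ^ 2 - lam * p.1 ^ 2) ^ 2 + p.2.2 ^ 2 * (p.2.1 ^ 2 + (lam : ℝ) ^ 2 * p.1 ^ 2))

/-- The distance to `e`. -/
noncomputable def rbD (e p : ℝ × ℝ × ℝ) : ℝ :=
  Real.sqrt ((p.1 - e.1) ^ 2 + (p.2.1 - e.2.1) ^ 2 + (p.2.2 - e.2.2) ^ 2)

/-- The sphere. -/
def rbS (lam : ℕ) (M : ℝ) : Set (ℝ × ℝ × ℝ) :=
  {p | p.1 ^ 2 + p.2.1 ^ 2 + p.2.2 ^ 2 = ((lam : ℝ) + 1) * M ^ 2}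

theorem rbS_compact (lam : ℕ) (M : ℝ) : IsCompact (rbS lam M) := by
  have hcl : IsClosed (rbS lam M) := isClosed_eq (by fun_prop) continuous_const
  obtain ⟨R, hR⟩ : ∃ R, R = ((lam : ℝ) + 1) * M ^ 2 := ⟨_, rfl⟩
  refine IsCompact.of_isClosed_subset
    ((isCompact_Icc (a := -(R + 1)) (b := R + 1)).prod
      ((isCompact_Icc (a := -(R + 1)) (b := R + 1)).prod
        (isCompact_Icc (a := -(R + 1)) (b := R + 1)))) hcl ?_
  rintro ⟨x, y, z⟩ hp
  have hp : x ^ 2 + y ^ 2 + z ^ 2 = R := by rw [hR]; exact hp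
  refine ⟨⟨?_, ?_⟩, ⟨?_, ?_⟩, ⟨?_, ?_⟩⟩ <;> dsimp only <;>
    nlinarith [sq_nonneg x, sq_nonneg y, sq_nonneg z, sq_nonneg (x + 1), sq_nonneg (x - 1),
      sq_nonneg (y + 1), sq_nonneg (y - 1), sq_nonneg (z + 1), sq_nonneg (z - 1)]

theorem rbD_lt {e p : ℝ × ℝ × ℝ} {r : ℝ} (h : rbD e p ≤ r) :
    |p.1 - e.1| ≤ r ∧ |p.2.1 - e.2.1| ≤ r ∧ |p.2.2 - e.2.2| ≤ r := by
  refine ⟨le_trans ?_ h, le_trans ?_ h, le_trans ?_ h⟩ <;> apply Real.abs_le_sqrt <;>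
    nlinarith [sq_nonneg (p.1 - e.1), sq_nonneg (p.2.1 - e.2.1), sq_nonneg (p.2.2 - e.2.2)]

/-- All facts needed about the Lyapunov pair. -/
theorem rb_facts (lam : ℕ) (hlam : 2 ≤ lam)
    (hev : Even lam) (M : ℝ) (hM : M ≠ 0) (ε : ℝ) (hε : 0 < ε)
    (h : ℝ) (hh : h = |M| ^ (lam + 1) * (Real.sqrt lam) ^ lam)
    (e : ℝ × ℝ × ℝ) (he : e = (|M|, |M| * Real.sqrt lam, 0)) :
    (∀ p ∈ rbS lam M, 0 ≤ rbV lam h p) ∧ (∀ p ∈ rbS lam M, 0 ≤ rbW lam ε h p) ∧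
    (∀ p ∈ rbS lam M, rbD e p ≤ 0 → rbV lam h p = 0) ∧
    (∀ p ∈ rbS lam M, 0 < rbD e p → rbD e p ≤ |M| / 2 → 0 < rbV lam h p) ∧
    (∀ p ∈ rbS lam M, 0 < rbD e p → rbD e p ≤ |M| / 2 → 0 < rbW lam ε h p) := by
  have hm : 0 < |M| := abs_pos.mpr hM
  have hl : (2 : ℝ) ≤ lam := by exact_mod_cast hlam
  have hs : 1 ≤ Real.sqrt lam := Real.one_le_sqrt.mpr (by linarith)
  have hs2 : Real.sqrt lam ^ 2 = lam := Real.sq_sqrt (by linarith)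
  have hsp : ∀ p ∈ rbS lam M,
      p.1 ^ 2 + p.2.1 ^ 2 + p.2.2 ^ 2 = ((lam : ℝ) + 1) * |M| ^ 2 := fun p hp => by
    rw [sq_abs]; exact hp
  have hV0 : ∀ p ∈ rbS lam M, 0 ≤ rbV lam h p := fun p hp => by
    have := rb_max_le lam hlam hev |M| (Real.sqrt lam) _ _ _ hm (by linarith) hs2 (hsp p hp)
    rw [rbV, hh]; linarith
  have hpos : ∀ p, rbD e p ≤ |M| / 2 → 0 < p.1 ∧ 0 < p.2.1 := fun p hp => by
    obtain ⟨h1, h2, -⟩ := rbD_lt hp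
    rw [he] at h1 h2
    have h1 := (abs_le.mp h1).1
    have h2 := (abs_le.mp h2).1
    dsimp only at h1 h2
    constructor <;> nlinarith
  have hDe : ∀ p, 0 < rbD e p → ¬ (p.1 = |M| ∧ p.2.1 = |M| * Real.sqrt lam ∧ p.2.2 = 0) := by
    rintro p hp ⟨h1, h2, h3⟩
    rw [rbD, he, h1, h2, h3] at hp
    simp at hp
  have hVp : ∀ p ∈ rbS lam M, 0 < rbD e p → rbD e p ≤ |M| / 2 → 0 < rbV lam h p := by
    intro p hp h0 h1
    by_contra hcon
    rw [rbV, hh] at hcon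
    exact hDe p h0 (rb_max lam hlam |M| (Real.sqrt lam) _ _ _ hm (by linarith) hs2
      (hpos p h1).1 (hpos p h1).2 (hsp p hp) (by linarith))
  refine ⟨hV0, ?_, ?_, hVp, ?_⟩
  · intro p hp
    have := hV0 p hp
    rw [rbV] at this
    rw [rbW]
    positivity
  · intro p _ h0
    obtain ⟨h1, h2, -⟩ := rbD_lt h0
    have h1 := abs_nonpos_iff.mp h1
    have h2 := abs_nonpos_iff.mp h2
    rw [rbV, sub_eq_zero.mp h1, sub_eq_zero.mp h2, hh, he]
    dsimp only
    rw [mul_pow]; ring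
  · intro p hp h0 h1
    have hv := hVp p hp h0 h1
    obtain ⟨hx, hy⟩ := hpos p h1
    rw [rbV] at hv
    rw [rbW]
    refine mul_pos (by positivity) ?_
    by_contra hcon
    have q1 : 0 ≤ (p.2.1 ^ 2 - lam * p.1 ^ 2) ^ 2 := sq_nonneg _
    have q2 : 0 < p.2.1 ^ 2 + (lam : ℝ) ^ 2 * p.1 ^ 2 := by positivity
    have q3 := mul_nonneg (sq_nonneg p.2.2) q2.le
    have e1 : p.2.1 ^ 2 - lam * p.1 ^ 2 = 0 := by
      apply pow_eq_zero_iff (two_ne_zero) |>.mp; linarith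
    have e2 : p.2.2 = 0 := by
      have : p.2.2 ^ 2 * (p.2.1 ^ 2 + (lam : ℝ) ^ 2 * p.1 ^ 2) = 0 := by linarith
      rcases mul_eq_zero.mp this with h | h
      · exact pow_eq_zero_iff (two_ne_zero) |>.mp h
      · linarith
    have e3 := hsp p hp
    rw [e2] at e3
    have e4 : p.1 = |M| := by
      have : p.1 ^ 2 = |M| ^ 2 := by
        apply mul_left_cancel₀ (by positivity : (lam : ℝ) + 1 ≠ 0); linarith
      exact (pow_left_inj₀ hx.le hm.le two_ne_zero).mp this
    have e5 : p.2.1 = |M| * Real.sqrt lam := by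
      refine (pow_left_inj₀ hy.le (by positivity) two_ne_zero).mp ?_
      rw [mul_pow, hs2, ← e4]; linarith
    exact hDe p h0 ⟨e4, e5, e2⟩

/-- Solutions starting on the sphere. -/
theorem rb_sol (lam : ℕ) (hlam : 2 ≤ lam) (M ε h : ℝ) (x y z : ℝ → ℝ)
    (hx : ∀ t : ℝ, HasDerivAt x ((lam : ℝ) * x t * z t +
        ε * (x t * (y t) ^ lam - h) * (y t) ^ (lam - 1) *
          (y t * ((lam : ℝ) * (x t) ^ 2 - (y t) ^ 2 - (z t) ^ 2))) t)
    (hy : ∀ t : ℝ, HasDerivAt y (-(y t * z t) +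
        ε * (x t * (y t) ^ lam - h) * (y t) ^ (lam - 1) *
          (x t * (-(lam : ℝ) * (x t) ^ 2 + (y t) ^ 2 - (lam : ℝ) * (z t) ^ 2))) t)
    (hz : ∀ t : ℝ, HasDerivAt z ((y t) ^ 2 - (lam : ℝ) * (x t) ^ 2 +
        ε * (x t * (y t) ^ lam - h) * (y t) ^ (lam - 1) *
          (((lam : ℝ) + 1) * x t * y t * z t)) t)
    (h0 : (x 0) ^ 2 + (y 0) ^ 2 + (z 0) ^ 2 = ((lam : ℝ) + 1) * M ^ 2) :
    Continuous (fun t => (x t, y t, z t)) ∧ (∀ t, (x t, y t, z t) ∈ rbS lam M) ∧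
    (∀ t, HasDerivAt (fun s => rbV lam h (x s, y s, z s)) (-(rbW lam ε h (x t, y t, z t))) t) := by
  refine ⟨?_, ?_, ?_⟩
  · have cx : Continuous x := continuous_iff_continuousAt.mpr fun t => (hx t).continuousAt
    have cy : Continuous y := continuous_iff_continuousAt.mpr fun t => (hy t).continuousAt
    have cz : Continuous z := continuous_iff_continuousAt.mpr fun t => (hz t).continuousAt
    fun_prop
  · have hd : ∀ t, HasDerivAt (fun s => x s ^ 2 + y s ^ 2 + z s ^ 2) 0 t := fun t => by
      have := (((hx t).pow 2).add ((hy t).pow 2)).add ((hz t).pow 2)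
      refine this.congr_deriv ?_
      push_cast
      ring
    intro t
    have := is_const_of_deriv_eq_zero (fun t => (hd t).differentiableAt)
      (fun t => (hd t).deriv) t 0
    exact this.trans h0
  · intro t
    have := ((hx t).mul ((hy t).pow lam)).const_sub h
    refine HasDerivAt.congr_deriv this ?_
    clear this
    obtain ⟨n, rfl⟩ : ∃ n, lam = n + 1 := ⟨lam - 1, by omega⟩
    simp only [rbW, Nat.add_sub_cancel, Pi.pow_apply]
    push_cast
    ring

/-- For even `λ ≥ 2`, `M ≠ 0`, `ε > 0` and `h = |M|^{λ+1}(√λ)^λ`, the point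
`e₊ = (|M|, |M|√λ, 0)` is an equilibrium of the perturbed rattleback system `p₋`
which is asymptotically stable with respect to perturbations along the invariant
sphere `x² + y² + z² = (λ+1)M²`: (i) Lyapunov stability along the sphere, and
(ii) local attractivity along the sphere. -/
theorem rattleback_perturbed_stabilizes_equilibrium (lam : ℕ) (hlam : 2 ≤ lam)
    (hev : Even lam) (M : ℝ) (hM : M ≠ 0) (ε : ℝ) (hε : 0 < ε)
    (h : ℝ) (hh : h = |M| ^ (lam + 1) * (Real.sqrt lam) ^ lam)
    (e : ℝ × ℝ × ℝ) (he : e = (|M|, |M| * Real.sqrt lam, 0)) :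
    -- e₊ is an equilibrium of the perturbed system p₋
    ((lam : ℝ) * e.1 * e.2.2 +
        ε * (e.1 * e.2.1 ^ lam - h) * e.2.1 ^ (lam - 1) *
          (e.2.1 * ((lam : ℝ) * e.1 ^ 2 - e.2.1 ^ 2 - e.2.2 ^ 2)) = 0 ∧
      -(e.2.1 * e.2.2) +
        ε * (e.1 * e.2.1 ^ lam - h) * e.2.1 ^ (lam - 1) *
          (e.1 * (-(lam : ℝ) * e.1 ^ 2 + e.2.1 ^ 2 - (lam : ℝ) * e.2.2 ^ 2)) = 0 ∧
      e.2.1 ^ 2 - (lam : ℝ) * e.1 ^ 2 +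
        ε * (e.1 * e.2.1 ^ lam - h) * e.2.1 ^ (lam - 1) *
          (((lam : ℝ) + 1) * e.1 * e.2.1 * e.2.2) = 0) ∧
    -- (i) stability along the invariant sphere
    (∀ ε' > (0 : ℝ), ∃ δ > (0 : ℝ), ∀ x y z : ℝ → ℝ,
      (∀ t : ℝ, HasDerivAt x ((lam : ℝ) * x t * z t +
        ε * (x t * (y t) ^ lam - h) * (y t) ^ (lam - 1) *
          (y t * ((lam : ℝ) * (x t) ^ 2 - (y t) ^ 2 - (z t) ^ 2))) t) →
      (∀ t : ℝ, HasDerivAt y (-(y t * z t) +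
        ε * (x t * (y t) ^ lam - h) * (y t) ^ (lam - 1) *
          (x t * (-(lam : ℝ) * (x t) ^ 2 + (y t) ^ 2 - (lam : ℝ) * (z t) ^ 2))) t) →
      (∀ t : ℝ, HasDerivAt z ((y t) ^ 2 - (lam : ℝ) * (x t) ^ 2 +
        ε * (x t * (y t) ^ lam - h) * (y t) ^ (lam - 1) *
          (((lam : ℝ) + 1) * x t * y t * z t)) t) →
      (x 0) ^ 2 + (y 0) ^ 2 + (z 0) ^ 2 = ((lam : ℝ) + 1) * M ^ 2 →
      Real.sqrt ((x 0 - e.1) ^ 2 + (y 0 - e.2.1) ^ 2 + (z 0 - e.2.2) ^ 2) < δ →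
      ∀ t ≥ (0 : ℝ),
        Real.sqrt ((x t - e.1) ^ 2 + (y t - e.2.1) ^ 2 + (z t - e.2.2) ^ 2) < ε') ∧
    -- (ii) attractivity along the invariant sphere
    (∃ δ₀ > (0 : ℝ), ∀ x y z : ℝ → ℝ,
      (∀ t : ℝ, HasDerivAt x ((lam : ℝ) * x t * z t +
        ε * (x t * (y t) ^ lam - h) * (y t) ^ (lam - 1) *
          (y t * ((lam : ℝ) * (x t) ^ 2 - (y t) ^ 2 - (z t) ^ 2))) t) →
      (∀ t : ℝ, HasDerivAt y (-(y t * z t) +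
        ε * (x t * (y t) ^ lam - h) * (y t) ^ (lam - 1) *
          (x t * (-(lam : ℝ) * (x t) ^ 2 + (y t) ^ 2 - (lam : ℝ) * (z t) ^ 2))) t) →
      (∀ t : ℝ, HasDerivAt z ((y t) ^ 2 - (lam : ℝ) * (x t) ^ 2 +
        ε * (x t * (y t) ^ lam - h) * (y t) ^ (lam - 1) *
          (((lam : ℝ) + 1) * x t * y t * z t)) t) →
      (x 0) ^ 2 + (y 0) ^ 2 + (z 0) ^ 2 = ((lam : ℝ) + 1) * M ^ 2 →
      Real.sqrt ((x 0 - e.1) ^ 2 + (y 0 - e.2.1) ^ 2 + (z 0 - e.2.2) ^ 2) < δ₀ →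
      Tendsto (fun t : ℝ => (x t, y t, z t)) atTop (nhds e)) := by
  have hl0 : (0 : ℝ) ≤ lam := Nat.cast_nonneg _
  obtain ⟨hV0, hW0, hD0, hVp, hWp⟩ := rb_facts lam hlam hev M hM ε hε h hh e he
  have hr : 0 < |M| / 2 := by have := abs_pos.mpr hM; positivity
  have cD : Continuous (rbD e) := by unfold rbD; fun_prop
  have cV : Continuous (rbV lam h) := by unfold rbV; fun_prop
  have cW : Continuous (rbW lam ε h) := by unfold rbW; fun_prop
  refine ⟨?_, ?_, ?_⟩
  · have e1 : |M| * (|M| * Real.sqrt lam) ^ lam - h = 0 := by rw [hh, mul_pow]; ring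
    have e2 : (|M| * Real.sqrt lam) ^ 2 = lam * |M| ^ 2 := by
      rw [mul_pow, Real.sq_sqrt hl0]; ring
    rw [he]
    dsimp only
    rw [e1, e2]
    refine ⟨by ring, by ring, by ring⟩
  · intro η hη
    obtain ⟨δ, hδ, H⟩ := rb_stab _ (rbS_compact lam M) (rbD e) (rbV lam h) (rbW lam ε h) cD cV hW0
      hD0 _ hr hVp η hη
    refine ⟨δ, hδ, fun x y z hx hy hz h0 hd => ?_⟩
    obtain ⟨c, hS, hder⟩ := rb_sol lam hlam M ε h x y z hx hy hz h0
    exact H _ c hS hder 0 hd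
  · obtain ⟨δ, hδ, H⟩ := rb_attr _ (rbS_compact lam M) (rbD e) (rbV lam h) (rbW lam ε h) cD cV cW
      hV0 hW0 hD0 _ hr hVp hWp
    refine ⟨δ, hδ, fun x y z hx hy hz h0 hd => ?_⟩
    obtain ⟨c, hS, hder⟩ := rb_sol lam hlam M ε h x y z hx hy hz h0
    have K := H _ c hS hder hd
    rw [Metric.tendsto_atTop]
    intro η hη
    obtain ⟨T, hT⟩ := K (η / 2) (by linarith)
    refine ⟨T, fun t ht => ?_⟩
    obtain ⟨h1, h2, h3⟩ := rbD_lt (hT t ht).le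
    rw [Prod.dist_eq, Prod.dist_eq, Real.dist_eq, Real.dist_eq, Real.dist_eq]
    exact (max_le h1 (max_le h2 h3)).trans_lt (by linarith)
end
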